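/- arXiv:2202.12846 — 5 statements merged into one kernel-verified Lean document; each statement's English description precedes it below -/
import Mathlib

section
/- Let f : {±1}^n → {±1}, let N > n, let f̄ be the N-extension of f, and let π be a uniformly random permutation of [N]. Then for every k ∈ ℕ with 1 ≤ k ≤ n, the cross-predictability satisfies CP(orb(f̄), U^N) ≤ W^{<k}(f) + C(n,k)/C(N,k), where C(n,k) denotes the binomial coefficient; in particular, with N = n^{1+ε}, CP(orb(f̄), U^N) ≤ W^{<k}(f) + e^k · n^{-εk}. -/
open MeasureTheory ProbabilityTheory Filter Finset Asymptotics
open scoped NNReal ENNReal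

noncomputable section

/-- The ±1 value encoded by a Boolean bit. -/
def bsign (b : Bool) : ℝ := if b then 1 else -1

/-- Expectation over a uniformly random point of the Boolean cube `{±1}^n`. -/
def bExp (n : ℕ) (g : (Fin n → Bool) → ℝ) : ℝ :=
  (∑ x : Fin n → Bool, g x) / 2 ^ n

/-- A function on the Boolean cube is Boolean(-valued) if it takes values in `{±1}`. -/
def IsBooleanFn {n : ℕ} (f : (Fin n → Bool) → ℝ) : Prop := ∀ x, f x = 1 ∨ f x = -1

/-- Initialization distribution: the weights `w : ℝⁿ` and the bias `b` are
iid `N(0, 1/n)` Gaussians. -/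
def initMeasure (n : ℕ) : Measure ((Fin n → ℝ) × ℝ) :=
  (Measure.pi fun _ : Fin n => gaussianReal 0 (n : ℝ≥0)⁻¹).prod (gaussianReal 0 (n : ℝ≥0)⁻¹)

/-- Initial alignment `INAL(f, σ) = E_{w,b} [ (E_x [f(x) σ(wᵀx + b)])² ]`. -/
def INAL (n : ℕ) (f : (Fin n → Bool) → ℝ) (σ : ℝ → ℝ) : ℝ :=
  ∫ θ : (Fin n → ℝ) × ℝ,
    (bExp n fun x => f x * σ (∑ i, θ.1 i * bsign (x i) + θ.2)) ^ 2 ∂ initMeasure n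

/-- The `v`-Gaussian smoothing `Σ_v(t) = E_{Y ∼ N(0,v)} [σ(Y + t)]`. -/
def gsmooth (σ : ℝ → ℝ) (v : ℝ) (t : ℝ) : ℝ :=
  ∫ y, σ (y + t) ∂ gaussianReal 0 v.toNNReal

/-- `σ` is polynomially bounded: `|σ(x)| ≤ C |x|^c + C` for some `C, c > 0`. -/
def PolyBounded (σ : ℝ → ℝ) : Prop :=
  ∃ C : ℝ, 0 < C ∧ ∃ c : ℕ, 0 < c ∧ ∀ x : ℝ, |σ x| ≤ C * |x| ^ c + C

/-- `σ` is expressive: measurable, polynomially bounded, and its Gaussian smoothing has no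
two consecutive vanishing derivatives at `0`. -/
def Expressive (σ : ℝ → ℝ) : Prop :=
  Measurable σ ∧ PolyBounded σ ∧
    ∀ m : ℕ, iteratedDeriv m (gsmooth σ 1) 0 ≠ 0 ∨ iteratedDeriv (m + 1) (gsmooth σ 1) 0 ≠ 0

/-- A nonnegative sequence is negligible if it decays faster than any inverse polynomial. -/
def Negligible (g : ℕ → ℝ) : Prop :=
  ∀ c : ℕ, Tendsto (fun n : ℕ => (n : ℝ) ^ c * g n) atTop (nhds 0)

/-- Fourier character `M_S(x) = ∏_{i ∈ S} x_i`. -/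
def chi {n : ℕ} (S : Finset (Fin n)) (x : Fin n → Bool) : ℝ := ∏ i ∈ S, bsign (x i)

/-- Fourier coefficient `f̂(S) = E_x [f(x) M_S(x)]`. -/
def fourierCoef (n : ℕ) (f : (Fin n → Bool) → ℝ) (S : Finset (Fin n)) : ℝ :=
  bExp n fun x => f x * chi S x

/-- Fourier weight up to degree `k`: `W^{≤k}(f)`. -/
def weightLE (n k : ℕ) (f : (Fin n → Bool) → ℝ) : ℝ :=
  ∑ S ∈ Finset.univ.filter (fun S : Finset (Fin n) => S.card ≤ k), fourierCoef n f S ^ 2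

/-- Fourier weight strictly below degree `k`: `W^{<k}(f)`. -/
def weightLT (n k : ℕ) (f : (Fin n → Bool) → ℝ) : ℝ :=
  ∑ S ∈ Finset.univ.filter (fun S : Finset (Fin n) => S.card < k), fourierCoef n f S ^ 2

/-- The monomial `M_k(x) = ∏_{i=1}^k x_i`, viewed as a function on `{±1}^n`. -/
def monomial (n k : ℕ) : (Fin n → Bool) → ℝ :=
  fun x => ∏ i ∈ Finset.univ.filter (fun i : Fin n => (i : ℕ) < k), bsign (x i)

/-- The `N`-extension of `f : {±1}^n → ℝ` (for `n ≤ N`): ignore the last `N - n` coordinates. -/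
def extendFn (n N : ℕ) (f : (Fin n → Bool) → ℝ) : (Fin N → Bool) → ℝ :=
  fun x => f fun i => if h : (i : ℕ) < N then x ⟨i, h⟩ else false

/-- Cross-predictability of (the uniform distribution on) the orbit of `f` under coordinate
permutations, with uniform inputs: `CP(orb(f), U^N)`. -/
def orbitCP (N : ℕ) (f : (Fin N → Bool) → ℝ) : ℝ :=
  (∑ π : Equiv.Perm (Fin N), ∑ π' : Equiv.Perm (Fin N),
      (bExp N fun x => f (fun i => x (π i)) * f (fun i => x (π' i))) ^ 2) /
    (Fintype.card (Equiv.Perm (Fin N))) ^ 2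

/-- `N = n^{1+ε}` (rounded up). -/
def Ndim (ε : ℝ) (n : ℕ) : ℕ := ⌈(n : ℝ) ^ (1 + ε)⌉₊

/-!
Averaging over pairs `(π, π')` reduces to averaging over the single permutation `σ = π'⁻¹ π`,
and expanding `F = f̄` in characters gives `E[F(x ∘ σ) F(x)] = ∑ A, F̂(A) F̂(σ A)`. Since `F̂` is
supported on subsets of `J = [n]`, only the sets `A` with `σ A ⊆ J` contribute, so by
Cauchy–Schwarz and Parseval the square of this correlation is at most
`E[F²] ∑_{A : σ A ⊆ J} F̂(A)²`. A uniformly random `σ` maps `A` into `J` with probability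
`C(n, |A|) / C(N, |A|)`, which is at most `1` and decreases with `|A|`; splitting the sum at
`|A| = k` gives the bound.
-/

section Counting

lemma choose_succ_div_choose_succ_le {n N : ℕ} (h : n ≤ N) (m : ℕ) :
    (n.choose (m + 1) : ℝ) / N.choose (m + 1) ≤ (n.choose m : ℝ) / N.choose m * (n / N) := by
  rcases le_or_gt n m with hnm | hmn
  · rw [Nat.choose_eq_zero_of_lt (Nat.lt_succ_of_le hnm), Nat.cast_zero, zero_div]
    positivity
  have choose_succ_mul {M : ℕ} (hM : m < M) :
      (M.choose (m + 1) : ℝ) * (m + 1) = M.choose m * (M - m) := by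
    rw [← Nat.cast_sub hM.le]
    exact_mod_cast Nat.choose_succ_right_eq M m
  have hmN : m < N := hmn.trans_le h
  have hm : (m : ℝ) < N := by exact_mod_cast hmN
  have hn : (n : ℝ) ≤ N := by exact_mod_cast h
  calc (n.choose (m + 1) : ℝ) / N.choose (m + 1)
      = n.choose m / N.choose m * ((n - m) / (N - m)) := by
        rw [← mul_div_mul_right _ _ (m.cast_add_one_ne_zero (R := ℝ)), choose_succ_mul hmn,
          choose_succ_mul hmN, mul_div_mul_comm]
    _ ≤ n.choose m / N.choose m * (n / N) := by
        refine mul_le_mul_of_nonneg_left ?_ (by positivity)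
        rw [div_le_div_iff₀ (by linarith) (hm.trans_le' m.cast_nonneg)]
        nlinarith [m.cast_nonneg (α := ℝ)]

lemma antitone_choose_div_choose {n N : ℕ} (h : n ≤ N) :
    Antitone fun m => (n.choose m : ℝ) / N.choose m :=
  antitone_nat_of_succ_le fun m => (choose_succ_div_choose_succ_le h m).trans <|
    mul_le_of_le_one_right (by positivity) <|
      div_le_one_of_le₀ (by exact_mod_cast h) N.cast_nonneg

lemma choose_div_choose_le_one {n N : ℕ} (h : n ≤ N) (m : ℕ) :
    (n.choose m : ℝ) / N.choose m ≤ 1 :=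
  div_le_one_of_le₀ (by exact_mod_cast Nat.choose_le_choose m h) (Nat.cast_nonneg _)

lemma choose_div_choose_le_pow {n N : ℕ} (h : n ≤ N) (k : ℕ) :
    (n.choose k : ℝ) / N.choose k ≤ ((n : ℝ) / N) ^ k := by
  induction k with
  | zero => simp
  | succ k ih =>
    rw [pow_succ]
    exact (choose_succ_div_choose_succ_le h k).trans
      (mul_le_mul_of_nonneg_right ih (by positivity))

lemma choose_div_choose_le_rpow {n N : ℕ} (hn : 0 < n) (h : n ≤ N) (k : ℕ) {ε : ℝ}
    (hN : (n : ℝ) ^ (1 + ε) ≤ N) :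
    (n.choose k : ℝ) / N.choose k ≤ (n : ℝ) ^ (-(ε * k)) := by
  have hn' : (0 : ℝ) < n := by exact_mod_cast hn
  have hN' : (0 : ℝ) < N := by exact_mod_cast hn.trans_le h
  have ratio_le : (n : ℝ) / N ≤ (n : ℝ) ^ (-ε) := by
    rw [div_le_iff₀ hN']
    calc (n : ℝ) = (n : ℝ) ^ (-ε) * (n : ℝ) ^ (1 + ε) := by rw [← Real.rpow_add hn']; simp
      _ ≤ (n : ℝ) ^ (-ε) * N := by gcongr
  calc (n.choose k : ℝ) / N.choose k ≤ ((n : ℝ) / N) ^ k := choose_div_choose_le_pow h k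
    _ ≤ ((n : ℝ) ^ (-ε)) ^ k := by gcongr
    _ = (n : ℝ) ^ (-(ε * k)) := by rw [← Real.rpow_mul_natCast hn'.le, neg_mul]

variable {ι : Type*}

lemma exists_perm_map_eq {A B : Finset ι} (h : #A = #B) :
    ∃ σ : Equiv.Perm ι, A.map σ.toEmbedding = B := by
  classical
  have : MulAction.IsPretransitive (Equiv.Perm ι) (Set.powersetCard ι #B) :=
    Set.powersetCard.isPretransitive
  obtain ⟨σ, hσ⟩ := MulAction.exists_smul_eq (Equiv.Perm ι)
    (⟨A, h⟩ : Set.powersetCard ι #B) ⟨B, rfl⟩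
  exact ⟨σ, by simpa [map_eq_image, smul_finset_def] using congrArg Subtype.val hσ⟩

variable [Fintype ι] [DecidableEq ι]

lemma card_perm_map_subset_congr {A B : Finset ι} (h : #A = #B) (J : Finset ι) :
    #{σ : Equiv.Perm ι | A.map σ.toEmbedding ⊆ J} =
      #{σ : Equiv.Perm ι | B.map σ.toEmbedding ⊆ J} := by
  obtain ⟨τ, rfl⟩ := exists_perm_map_eq h
  refine (card_equiv (Equiv.mulRight τ) fun σ => ?_).symm
  simp only [mem_filter_univ, Finset.map_map]
  rfl

lemma card_filter_powersetCard_map_subset (σ : Equiv.Perm ι) (J : Finset ι) (b : ℕ) :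
    #{A ∈ powersetCard b univ | A.map σ.toEmbedding ⊆ J} = (#J).choose b := by
  rw [← card_map σ.symm.toEmbedding (s := J), ← card_powersetCard]
  congr 1
  ext A
  simp [mem_powersetCard, subset_map_symm, and_comm]

-- Double counting of the pairs `(σ, B)` with `#B = #A` and `σ B ⊆ J`.
lemma card_perm_map_subset_mul_choose (A J : Finset ι) :
    #{σ : Equiv.Perm ι | A.map σ.toEmbedding ⊆ J} * (Fintype.card ι).choose #A =
      Fintype.card (Equiv.Perm ι) * (#J).choose #A := by
  calc #{σ : Equiv.Perm ι | A.map σ.toEmbedding ⊆ J} * (Fintype.card ι).choose #A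
      = ∑ B ∈ powersetCard #A univ, #{σ : Equiv.Perm ι | B.map σ.toEmbedding ⊆ J} := by
        rw [sum_congr rfl fun B hB => card_perm_map_subset_congr (mem_powersetCard.mp hB).2 J,
          sum_const, card_powersetCard, card_univ, smul_eq_mul, mul_comm]
    _ = ∑ σ : Equiv.Perm ι, #{B ∈ powersetCard #A univ | B.map σ.toEmbedding ⊆ J} :=
        (sum_card_bipartiteAbove_eq_sum_card_bipartiteBelow _).symm
    _ = Fintype.card (Equiv.Perm ι) * (#J).choose #A := by
        simp only [card_filter_powersetCard_map_subset, sum_const, card_univ, smul_eq_mul]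

lemma card_perm_map_subset_div_card (A J : Finset ι) :
    (#{σ : Equiv.Perm ι | A.map σ.toEmbedding ⊆ J} : ℝ) / Fintype.card (Equiv.Perm ι) =
      (#J).choose #A / (Fintype.card ι).choose #A := by
  have card_perm_ne : (Fintype.card (Equiv.Perm ι) : ℝ) ≠ 0 := by
    exact_mod_cast Fintype.card_ne_zero
  have choose_ne : ((Fintype.card ι).choose #A : ℝ) ≠ 0 := by
    exact_mod_cast (Nat.choose_pos A.card_le_univ).ne'
  rw [div_eq_div_iff card_perm_ne choose_ne, mul_comm ((#J).choose #A : ℝ)]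
  exact_mod_cast card_perm_map_subset_mul_choose A J

end Counting

section Fourier

variable {n N : ℕ}

lemma sum_chi_mul_chi (x y : Fin n → Bool) :
    ∑ S : Finset (Fin n), chi S x * chi S y = if x = y then 2 ^ n else 0 := by
  have sum_eq_prod : ∑ S : Finset (Fin n), chi S x * chi S y =
      ∏ i, (1 + bsign (x i) * bsign (y i)) := by
    simp only [prod_one_add, powerset_univ, chi, prod_mul_distrib]
  have factor (b c : Bool) : 1 + bsign b * bsign c = if b = c then 2 else 0 := by
    cases b <;> cases c <;> norm_num [bsign]
  simp only [sum_eq_prod, factor]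
  split_ifs with hxy
  · simp [hxy]
  · obtain ⟨i, hi⟩ := Function.ne_iff.mp hxy
    exact prod_eq_zero (mem_univ i) (if_neg hi)

lemma fourierCoef_chi (S T : Finset (Fin n)) :
    fourierCoef n (chi S) T = if S = T then 1 else 0 := by
  have sum_eq_prod : ∑ x : Fin n → Bool, chi S x * chi T x =
      ∏ i, ∑ b : Bool, (if i ∈ S then bsign b else 1) * (if i ∈ T then bsign b else 1) := by
    rw [prod_univ_sum, Fintype.piFinset_univ]
    simp only [prod_mul_distrib, prod_ite_mem, univ_inter, chi]
  have factor (i : Fin n) :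
      ∑ b : Bool, (if i ∈ S then bsign b else 1) * (if i ∈ T then bsign b else 1) =
        if i ∈ S ↔ i ∈ T then 2 else 0 := by
    by_cases hS : i ∈ S <;> by_cases hT : i ∈ T <;> norm_num [bsign, hS, hT]
  simp only [fourierCoef, bExp, sum_eq_prod, factor]
  split_ifs with hST
  · simp [hST]
  · obtain ⟨i, hi⟩ : ∃ i, ¬(i ∈ S ↔ i ∈ T) := not_forall.mp (mt Finset.ext hST)
    rw [prod_eq_zero (mem_univ i) (if_neg hi), zero_div]

lemma sum_fourierCoef_mul_chi (f : (Fin n → Bool) → ℝ) (x : Fin n → Bool) :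
    ∑ S, fourierCoef n f S * chi S x = f x := by
  calc ∑ S, fourierCoef n f S * chi S x
      = (∑ y, f y * ∑ S, chi S y * chi S x) / 2 ^ n := by
        simp only [fourierCoef, bExp, mul_sum, div_mul_eq_mul_div, sum_mul, ← sum_div, mul_assoc]
        rw [sum_comm]
    _ = f x := by simp [sum_chi_mul_chi]

lemma chi_map (e : Fin n ↪ Fin N) (S : Finset (Fin n)) (x : Fin N → Bool) :
    chi (S.map e) x = chi S fun i => x (e i) :=
  prod_map _ _ _

lemma bExp_comp_embedding_mul (e : Fin n ↪ Fin N) (f : (Fin n → Bool) → ℝ)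
    (g : (Fin N → Bool) → ℝ) :
    bExp N (fun x => f (fun i => x (e i)) * g x) =
      ∑ S, fourierCoef n f S * fourierCoef N g (S.map e) := by
  have expand (x : Fin N → Bool) : f (fun i => x (e i)) * g x =
      ∑ S, fourierCoef n f S * (g x * chi (S.map e) x) := by
    rw [← sum_fourierCoef_mul_chi f, sum_mul]
    exact sum_congr rfl fun S _ => by rw [chi_map]; ring
  simp only [expand, fourierCoef, bExp]
  rw [sum_comm, sum_div]
  simp only [← mul_sum, mul_div_assoc]

lemma bExp_sq (f : (Fin n → Bool) → ℝ) : bExp n (f ^ 2) = ∑ S, fourierCoef n f S ^ 2 := by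
  simpa [sq, Pi.mul_def] using bExp_comp_embedding_mul (Function.Embedding.refl _) f f

lemma bExp_sq_nonneg (f : (Fin n → Bool) → ℝ) : 0 ≤ bExp n (f ^ 2) := by
  rw [bExp_sq]
  positivity

lemma IsBooleanFn.bExp_sq_eq_one {f : (Fin n → Bool) → ℝ} (hf : IsBooleanFn f) :
    bExp n (f ^ 2) = 1 := by
  have sq_eq_one : f ^ 2 = 1 := funext fun x => sq_eq_one_iff.mpr (hf x)
  simp only [bExp, sq_eq_one]
  simp

end Fourier

section OrbitCP

variable {N : ℕ}

lemma bExp_comp_perm (τ : Equiv.Perm (Fin N)) (g : (Fin N → Bool) → ℝ) :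
    bExp N (fun x => g fun i => x (τ i)) = bExp N g :=
  congrArg (· / 2 ^ N) (Equiv.sum_comp (τ.symm.arrowCongr (Equiv.refl Bool)) g)

lemma sum_sq_bExp_comp_perm (F : (Fin N → Bool) → ℝ) (π' : Equiv.Perm (Fin N)) :
    ∑ π : Equiv.Perm (Fin N), bExp N (fun x => F (fun i => x (π i)) * F fun i => x (π' i)) ^ 2 =
      ∑ σ : Equiv.Perm (Fin N), bExp N (fun x => F (fun i => x (σ i)) * F x) ^ 2 := by
  refine Fintype.sum_equiv (Equiv.mulLeft π'⁻¹) _ _ fun π => ?_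
  have shift := bExp_comp_perm π' fun x => F (fun i => x ((π'⁻¹ * π) i)) * F x
  simpa using congrArg (· ^ 2) shift

lemma orbitCP_eq_average (F : (Fin N → Bool) → ℝ) :
    orbitCP N F = (∑ σ : Equiv.Perm (Fin N), bExp N (fun x => F (fun i => x (σ i)) * F x) ^ 2) /
      Fintype.card (Equiv.Perm (Fin N)) := by
  rw [orbitCP, sum_comm]
  simp only [sum_sq_bExp_comp_perm, sum_const, card_univ, nsmul_eq_mul, sq (Fintype.card _ : ℝ)]
  exact mul_div_mul_left _ _ (by exact_mod_cast Fintype.card_ne_zero)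

/-- `F` has no Fourier mass outside the subsets of `J`; equivalently, `F` is a junta on `J`. This is
the only property of an `N`-extension that the cross-predictability bound depends on. -/
def FourierSupportedOn (F : (Fin N → Bool) → ℝ) (J : Finset (Fin N)) : Prop :=
  ∀ A, ¬A ⊆ J → fourierCoef N F A = 0

namespace FourierSupportedOn

variable {F : (Fin N → Bool) → ℝ} {J : Finset (Fin N)}

lemma sq_bExp_comp_perm_mul_le (hF : FourierSupportedOn F J) (σ : Equiv.Perm (Fin N)) :
    bExp N (fun x => F (fun i => x (σ i)) * F x) ^ 2 ≤
      bExp N (F ^ 2) *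
        ∑ A : Finset (Fin N) with A.map σ.toEmbedding ⊆ J, fourierCoef N F A ^ 2 := by
  have restrict : bExp N (fun x => F (fun i => x (σ i)) * F x) =
      ∑ A : Finset (Fin N) with A.map σ.toEmbedding ⊆ J,
        fourierCoef N F A * fourierCoef N F (A.map σ.toEmbedding) := by
    rw [← Equiv.coe_toEmbedding, bExp_comp_embedding_mul, sum_filter_of_ne]
    exact fun A _ hA => not_imp_comm.mp (hF _) (right_ne_zero_of_mul hA)
  have parseval :
      ∑ A : Finset (Fin N), fourierCoef N F (A.map σ.toEmbedding) ^ 2 = bExp N (F ^ 2) :=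
    (Equiv.sum_comp σ.finsetCongr fun A => fourierCoef N F A ^ 2).trans (bExp_sq F).symm
  calc bExp N (fun x => F (fun i => x (σ i)) * F x) ^ 2
      ≤ (∑ A : Finset (Fin N) with A.map σ.toEmbedding ⊆ J, fourierCoef N F A ^ 2) *
          ∑ A : Finset (Fin N) with A.map σ.toEmbedding ⊆ J,
            fourierCoef N F (A.map σ.toEmbedding) ^ 2 := by
        rw [restrict]
        exact sum_mul_sq_le_sq_mul_sq _ _ _
    _ ≤ (∑ A : Finset (Fin N) with A.map σ.toEmbedding ⊆ J, fourierCoef N F A ^ 2) *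
          bExp N (F ^ 2) := by
        rw [← parseval]
        gcongr
        exact filter_subset _ _
    _ = _ := mul_comm _ _

lemma orbitCP_le_sum (hF : FourierSupportedOn F J) :
    orbitCP N F ≤
      bExp N (F ^ 2) * ∑ A, fourierCoef N F A ^ 2 * ((#J).choose #A / N.choose #A) := by
  have count (A : Finset (Fin N)) :
      (∑ σ : Equiv.Perm (Fin N), if A.map σ.toEmbedding ⊆ J then fourierCoef N F A ^ 2 else 0) /
        Fintype.card (Equiv.Perm (Fin N)) =
      fourierCoef N F A ^ 2 * ((#J).choose #A / N.choose #A) := by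
    have prob := card_perm_map_subset_div_card A J
    rw [Fintype.card_fin] at prob
    rw [← prob, ← sum_filter, sum_const, nsmul_eq_mul, mul_comm, mul_div_assoc]
  calc orbitCP N F
      ≤ (∑ σ : Equiv.Perm (Fin N),
          bExp N (F ^ 2) *
            ∑ A : Finset (Fin N) with A.map σ.toEmbedding ⊆ J, fourierCoef N F A ^ 2) /
            Fintype.card (Equiv.Perm (Fin N)) := by
        rw [orbitCP_eq_average]
        gcongr with σ
        exact hF.sq_bExp_comp_perm_mul_le σ
    _ = _ := by
        simp only [← mul_sum, mul_div_assoc, sum_filter]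
        rw [sum_comm, sum_div]
        simp only [count]

lemma orbitCP_le_weightLT_add (hF : FourierSupportedOn F J) (k : ℕ) :
    orbitCP N F ≤
      bExp N (F ^ 2) * (weightLT N k F + bExp N (F ^ 2) * ((#J).choose k / N.choose k)) := by
  have hJ : #J ≤ N := J.card_le_univ.trans_eq (Fintype.card_fin N)
  refine hF.orbitCP_le_sum.trans (mul_le_mul_of_nonneg_left ?_ (bExp_sq_nonneg F))
  rw [weightLT, sum_filter, bExp_sq, sum_mul, ← sum_add_distrib]
  refine sum_le_sum fun A _ => ?_
  split_ifs with hA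
  · exact (mul_le_of_le_one_right (sq_nonneg _) (choose_div_choose_le_one hJ _)).trans
      (le_add_of_nonneg_right (by positivity))
  · rw [zero_add]
    exact mul_le_mul_of_nonneg_left (antitone_choose_div_choose hJ (not_lt.mp hA)) (sq_nonneg _)

end FourierSupportedOn

end OrbitCP

section Extension

variable {n N : ℕ}

lemma extendFn_apply (h : n ≤ N) (f : (Fin n → Bool) → ℝ) (x : Fin N → Bool) :
    extendFn n N f x = f fun i => x (Fin.castLEEmb h i) :=
  congrArg f <| funext fun i => dif_pos (i.2.trans_le h)

lemma fourierCoef_extendFn (h : n ≤ N) (f : (Fin n → Bool) → ℝ) (A : Finset (Fin N)) :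
    fourierCoef N (extendFn n N f) A =
      ∑ S, if S.map (Fin.castLEEmb h) = A then fourierCoef n f S else 0 := by
  rw [funext (extendFn_apply h f), fourierCoef, bExp_comp_embedding_mul]
  simp [fourierCoef_chi, eq_comm]

lemma fourierCoef_extendFn_map (h : n ≤ N) (f : (Fin n → Bool) → ℝ) (S : Finset (Fin n)) :
    fourierCoef N (extendFn n N f) (S.map (Fin.castLEEmb h)) = fourierCoef n f S := by
  simp [fourierCoef_extendFn h]

lemma fourierCoef_extendFn_of_notMem_range (h : n ≤ N) (f : (Fin n → Bool) → ℝ)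
    {A : Finset (Fin N)} (hA : A ∉ Set.range (Finset.map (Fin.castLEEmb h))) :
    fourierCoef N (extendFn n N f) A = 0 := by
  rw [fourierCoef_extendFn h]
  exact sum_eq_zero fun S _ => if_neg fun hS => hA ⟨S, hS⟩

lemma fourierSupportedOn_extendFn (h : n ≤ N) (f : (Fin n → Bool) → ℝ) :
    FourierSupportedOn (extendFn n N f) (univ.map (Fin.castLEEmb h)) := by
  refine fun A hA => fourierCoef_extendFn_of_notMem_range h f ?_
  rintro ⟨S, rfl⟩
  exact hA (map_subset_map.mpr (subset_univ S))

lemma sum_fourierCoef_extendFn (h : n ≤ N) (f : (Fin n → Bool) → ℝ) {φ : ℕ → ℝ → ℝ}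
    (hφ : ∀ m, φ m 0 = 0) :
    ∑ A, φ #A (fourierCoef N (extendFn n N f) A) = ∑ S, φ #S (fourierCoef n f S) := by
  refine (Fintype.sum_of_injective _ (map_injective (Fin.castLEEmb h)) _ _ (fun A hA => ?_)
    fun S => ?_).symm
  · rw [fourierCoef_extendFn_of_notMem_range h f hA, hφ]
  · rw [fourierCoef_extendFn_map, card_map]

lemma bExp_extendFn_sq (h : n ≤ N) (f : (Fin n → Bool) → ℝ) :
    bExp N (extendFn n N f ^ 2) = bExp n (f ^ 2) := by
  rw [bExp_sq, bExp_sq]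
  exact sum_fourierCoef_extendFn h f (φ := fun _ c => c ^ 2) (by simp)

lemma weightLT_extendFn (h : n ≤ N) (k : ℕ) (f : (Fin n → Bool) → ℝ) :
    weightLT N k (extendFn n N f) = weightLT n k f := by
  rw [weightLT, weightLT, sum_filter, sum_filter]
  exact sum_fourierCoef_extendFn h f (φ := fun m c => if m < k then c ^ 2 else 0) (by simp)

end Extension

theorem orbitCP_le_low_weight_add_choose_general {n N : ℕ} (hn : 0 < n) (hnN : n ≤ N)
    (f : (Fin n → Bool) → ℝ) (k : ℕ) (ε : ℝ) :
    orbitCP N (extendFn n N f) ≤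
        bExp n (f ^ 2) * (weightLT n k f + bExp n (f ^ 2) * (n.choose k / N.choose k)) ∧
      ((n : ℝ) ^ (1 + ε) ≤ N →
        orbitCP N (extendFn n N f) ≤
          bExp n (f ^ 2) * (weightLT n k f + bExp n (f ^ 2) * (n : ℝ) ^ (-(ε * k)))) := by
  have choose_bound := (fourierSupportedOn_extendFn hnN f).orbitCP_le_weightLT_add k
  rw [bExp_extendFn_sq hnN, weightLT_extendFn hnN, card_map, card_univ, Fintype.card_fin]
    at choose_bound
  have sq_nonneg := bExp_sq_nonneg f
  refine ⟨choose_bound, fun hN => choose_bound.trans ?_⟩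
  gcongr
  exact choose_div_choose_le_rpow hn hnN k hN

/-- For `f : {±1}^n → {±1}`, `N > n` and `1 ≤ k ≤ n`, the
cross-predictability of the orbit of the `N`-extension `f̄` satisfies
`CP(orb(f̄), U^N) ≤ W^{<k}(f) + C(n,k)/C(N,k)`; in particular, when `N ≥ n^{1+ε}`,
`CP(orb(f̄), U^N) ≤ W^{<k}(f) + e^k n^{-εk}`. -/
theorem orbitCP_le_low_weight_add_choose
    (n N : ℕ) (hnN : n < N) (f : (Fin n → Bool) → ℝ) (hf : IsBooleanFn f)
    (k : ℕ) (hk1 : 1 ≤ k) (hkn : k ≤ n) (ε : ℝ) (hε : 0 < ε) :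
    orbitCP N (extendFn n N f) ≤
        weightLT n k f + (n.choose k : ℝ) / (N.choose k : ℝ) ∧
      ((n : ℝ) ^ (1 + ε) ≤ (N : ℝ) →
        orbitCP N (extendFn n N f) ≤
          weightLT n k f + Real.exp 1 ^ k * (n : ℝ) ^ (-(ε * k))) := by
  have general := orbitCP_le_low_weight_add_choose_general (hk1.trans hkn) hnN.le f k ε
  simp only [hf.bExp_sq_eq_one, one_mul] at general
  refine general.imp_right fun rpow_bound hN => (rpow_bound hN).trans ?_
  gcongr
  exact le_mul_of_one_le_left (by positivity) (one_le_pow₀ (Real.one_le_exp zero_le_one))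
end
end

section
/- Let σ : ℝ → ℝ be measurable and polynomially bounded. Then for every k ∈ ℕ and every v > 0, the k-th derivative Σ_v^{(k)} of the v-Gaussian smoothing Σ_v is polynomially bounded. Moreover, the bound can be taken uniform over v ∈ [1/2, 1]: for each k there exist constants C > 0 and ℓ ∈ ℕ (depending only on σ and k) such that |Σ_v^{(k)}(t)| ≤ C·t^{2ℓ} + C for every t ∈ ℝ and every 1/2 ≤ v ≤ 1. -/
open MeasureTheory ProbabilityTheory Filter Finset Asymptotics
open scoped NNReal ENNReal

noncomputable section

/-!
Rescaling by `√v` writes `Σ_v` as the convolution of `x ↦ σ (√v x)` with the standard Gaussian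
density, evaluated at `t / √v`. That density is a Schwartz function, so all derivatives fall on it,
and the convolution of a function of growth `(1 + |x|) ^ c` with a Schwartz function has polynomial
growth by Peetre's inequality `1 + |x| ≤ (1 + |t|) (1 + |t - x|)`. The variance enters the resulting
bound only through a continuous function of `v > 0`, which is bounded on compact sets.
-/

open scoped SchwartzMap ContDiff Convolution Polynomial

section SchwartzConvolution

lemma one_add_norm_le_mul_one_add_norm_sub {E : Type*} [SeminormedAddCommGroup E] (t x : E) :
    1 + ‖x‖ ≤ (1 + ‖t‖) * (1 + ‖t - x‖) := by
  have triangle : ‖x‖ ≤ ‖t‖ + ‖t - x‖ := by simpa using norm_sub_le t (t - x)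
  nlinarith [mul_nonneg (norm_nonneg t) (norm_nonneg (t - x))]

lemma exists_one_add_norm_pow_mul_norm_schwartz_le {E F : Type*} [NormedAddCommGroup E]
    [NormedSpace ℝ E] [NormedAddCommGroup F] [NormedSpace ℝ F] (f : 𝓢(E, F)) (n : ℕ) :
    ∃ M, ∀ u, (1 + ‖u‖) ^ n * ‖f u‖ ≤ M :=
  ⟨_, fun u => by
    simpa using f.one_add_le_sup_seminorm_apply (𝕜 := ℝ) (m := (n, 0)) le_rfl le_rfl u⟩

variable {E F F' G : Type*} [NormedAddCommGroup E]
  [NormedAddCommGroup F] [NormedSpace ℝ F] [NormedAddCommGroup F'] [NormedSpace ℝ F']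
  [NormedAddCommGroup G] [NormedSpace ℝ G] (L : F →L[ℝ] F' →L[ℝ] G)

lemma norm_convolution_integrand_le {σ : E → F} {f : E → F'} {B M : ℝ} {c n : ℕ}
    (hσ : ∀ x, ‖σ x‖ ≤ B * (1 + ‖x‖) ^ c) (hf : ∀ u, (1 + ‖u‖) ^ (c + n) * ‖f u‖ ≤ M) (t x : E) :
    ‖L (σ x) (f (t - x))‖ ≤
      ‖L‖ * M * B * (1 + ‖t‖) ^ (c + n) * (1 + ‖x‖) ^ (-(n : ℝ)) := by
  have hB : 0 ≤ B := by simpa using (norm_nonneg _).trans (hσ 0)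
  have kernel_le : (1 + ‖x‖) ^ (c + n) * ‖f (t - x)‖ ≤ (1 + ‖t‖) ^ (c + n) * M := by
    calc (1 + ‖x‖) ^ (c + n) * ‖f (t - x)‖
        ≤ ((1 + ‖t‖) * (1 + ‖t - x‖)) ^ (c + n) * ‖f (t - x)‖ := by
          gcongr; exact one_add_norm_le_mul_one_add_norm_sub t x
      _ = (1 + ‖t‖) ^ (c + n) * ((1 + ‖t - x‖) ^ (c + n) * ‖f (t - x)‖) := by
          rw [mul_pow, mul_assoc]
      _ ≤ (1 + ‖t‖) ^ (c + n) * M := by gcongr; exact hf (t - x)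
  rw [Real.rpow_neg (by positivity), Real.rpow_natCast]
  calc ‖L (σ x) (f (t - x))‖ ≤ ‖L‖ * ‖σ x‖ * ‖f (t - x)‖ := L.le_opNorm₂ _ _
    _ ≤ ‖L‖ * (B * (1 + ‖x‖) ^ c) * ‖f (t - x)‖ := by gcongr; exact hσ x
    _ = ‖L‖ * B * ((1 + ‖x‖) ^ (c + n) * ‖f (t - x)‖) * ((1 + ‖x‖) ^ n)⁻¹ := by
      field_simp
      ring
    _ ≤ ‖L‖ * B * ((1 + ‖t‖) ^ (c + n) * M) * ((1 + ‖x‖) ^ n)⁻¹ := by gcongr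
    _ = ‖L‖ * M * B * (1 + ‖t‖) ^ (c + n) * ((1 + ‖x‖) ^ n)⁻¹ := by ring

lemma exists_norm_convolution_schwartz_le [NormedSpace ℝ E] [MeasurableSpace E]
    (μ : Measure E) [μ.HasTemperateGrowth] (f : 𝓢(E, F')) (c : ℕ) :
    ∃ A ≥ 0, ∃ n : ℕ, ∀ (σ : E → F) (B : ℝ), (∀ x, ‖σ x‖ ≤ B * (1 + ‖x‖) ^ c) →
      ∀ t, ‖(σ ⋆[L, μ] f) t‖ ≤ A * B * (1 + ‖t‖) ^ n := by
  obtain ⟨M, hM⟩ := exists_one_add_norm_pow_mul_norm_schwartz_le f (c + μ.integrablePower)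
  refine ⟨‖L‖ * M * ∫ x, (1 + ‖x‖) ^ (-(μ.integrablePower : ℝ)) ∂μ, ?_, c + μ.integrablePower,
    fun σ B hσ t => ?_⟩
  · have hM0 : 0 ≤ M := le_trans (by positivity) (hM 0)
    exact mul_nonneg (by positivity) (integral_nonneg fun x => by positivity)
  refine (norm_integral_le_of_norm_le (μ.integrable_pow_neg_integrablePower.const_mul _)
    (.of_forall (norm_convolution_integrand_le L hσ hM t))).trans_eq ?_
  rw [integral_const_mul]
  ring

variable {σ : ℝ → F} {B : ℝ} {c : ℕ} {μ : Measure ℝ} [μ.HasTemperateGrowth]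

lemma integrable_convolution_integrand_schwartz (hmeas : AEStronglyMeasurable σ μ)
    (hσ : ∀ x, ‖σ x‖ ≤ B * (1 + ‖x‖) ^ c) (f : 𝓢(ℝ, F')) (t : ℝ) :
    Integrable (fun x => L (σ x) (f (t - x))) μ := by
  obtain ⟨M, hM⟩ := exists_one_add_norm_pow_mul_norm_schwartz_le f (c + μ.integrablePower)
  exact (μ.integrable_pow_neg_integrablePower.const_mul _).mono'
    (L.aestronglyMeasurable_comp₂ hmeas (by fun_prop))
    (.of_forall (norm_convolution_integrand_le L hσ hM t))

lemma hasDerivAt_convolution_schwartz (hmeas : AEStronglyMeasurable σ μ)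
    (hσ : ∀ x, ‖σ x‖ ≤ B * (1 + ‖x‖) ^ c) (f : 𝓢(ℝ, F')) (t : ℝ) :
    HasDerivAt (σ ⋆[L, μ] f) ((σ ⋆[L, μ] SchwartzMap.derivCLM ℝ F' f) t) t := by
  set f' := SchwartzMap.derivCLM ℝ F' f
  obtain ⟨M, hM⟩ := exists_one_add_norm_pow_mul_norm_schwartz_le f' (c + μ.integrablePower)
  have hB : 0 ≤ B := by simpa using (norm_nonneg _).trans (hσ 0)
  have hM0 : 0 ≤ M := le_trans (by positivity) (hM 0)
  have integrand_hasDerivAt (x s : ℝ) :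
      HasDerivAt (fun s => L (σ x) (f (s - x))) (L (σ x) (f' (s - x))) s :=
    (L (σ x)).hasFDerivAt.comp_hasDerivAt s ((f.hasDerivAt (s - x)).comp_sub_const s x)
  have deriv_bound : ∀ x, ∀ s ∈ Metric.ball t 1, ‖L (σ x) (f' (s - x))‖ ≤
      ‖L‖ * M * B * (1 + (‖t‖ + 1)) ^ (c + μ.integrablePower) *
        (1 + ‖x‖) ^ (-(μ.integrablePower : ℝ)) := fun x s hs => by
    refine (norm_convolution_integrand_le L hσ hM s x).trans ?_
    gcongr
    exact (norm_lt_of_mem_ball hs).le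
  exact (hasDerivAt_integral_of_dominated_loc_of_deriv_le (Metric.ball_mem_nhds t one_pos)
    (.of_forall fun s => (integrable_convolution_integrand_schwartz L hmeas hσ f s).1)
    (integrable_convolution_integrand_schwartz L hmeas hσ f t)
    (integrable_convolution_integrand_schwartz L hmeas hσ f' t).1
    (.of_forall deriv_bound) (μ.integrable_pow_neg_integrablePower.const_mul _)
    (.of_forall fun x s _ => integrand_hasDerivAt x s)).2

lemma iteratedDeriv_convolution_schwartz (hmeas : AEStronglyMeasurable σ μ)
    (hσ : ∀ x, ‖σ x‖ ≤ B * (1 + ‖x‖) ^ c) (f : 𝓢(ℝ, F')) (k : ℕ) :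
    iteratedDeriv k (σ ⋆[L, μ] f) = σ ⋆[L, μ] ((SchwartzMap.derivCLM ℝ F')^[k] f) := by
  induction k with
  | zero => rw [iteratedDeriv_zero, Function.iterate_zero_apply]
  | succ k ih =>
    rw [iteratedDeriv_succ, ih, Function.iterate_succ_apply']
    exact funext fun t => (hasDerivAt_convolution_schwartz L hmeas hσ _ t).deriv

lemma contDiff_convolution_schwartz (hmeas : AEStronglyMeasurable σ μ)
    (hσ : ∀ x, ‖σ x‖ ≤ B * (1 + ‖x‖) ^ c) (f : 𝓢(ℝ, F')) {n : ℕ∞} :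
    ContDiff ℝ n (σ ⋆[L, μ] f) :=
  contDiff_of_differentiable_iteratedDeriv fun k _ t => by
    rw [iteratedDeriv_convolution_schwartz L hmeas hσ f k]
    exact (hasDerivAt_convolution_schwartz L hmeas hσ _ t).differentiableAt

end SchwartzConvolution

section Gaussian

lemma abs_pow_mul_exp_neg_mul_sq_le {b : ℝ} (hb : 0 < b) (n : ℕ) (x : ℝ) :
    |x| ^ n * Real.exp (-b * x ^ 2) ≤ n.factorial * Real.exp (1 / (4 * b)) := by
  have pow_le : |x| ^ n ≤ n.factorial * Real.exp |x| := by
    rw [← div_le_iff₀' (by positivity)]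
    exact Real.pow_div_factorial_le_exp |x| (abs_nonneg x) n
  have exponent_le : |x| + -b * x ^ 2 ≤ 1 / (4 * b) := by
    have complete_square : 1 / (4 * b) - (|x| + -b * x ^ 2) = (2 * b * |x| - 1) ^ 2 / (4 * b) := by
      rw [← sq_abs x]
      field_simp
      ring
    have : 0 ≤ (2 * b * |x| - 1) ^ 2 / (4 * b) := by positivity
    linarith
  calc |x| ^ n * Real.exp (-b * x ^ 2)
      ≤ n.factorial * Real.exp |x| * Real.exp (-b * x ^ 2) := by gcongr
    _ = n.factorial * Real.exp (|x| + -b * x ^ 2) := by rw [Real.exp_add, mul_assoc]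
    _ ≤ n.factorial * Real.exp (1 / (4 * b)) := by gcongr

lemma exists_abs_eval_mul_exp_neg_mul_sq_le {b : ℝ} (hb : 0 < b) (p : ℝ[X]) :
    ∃ C, ∀ x, |p.eval x| * Real.exp (-b * x ^ 2) ≤ C := by
  induction p using Polynomial.induction_on' with
  | add p q hp hq =>
    obtain ⟨C, hC⟩ := hp
    obtain ⟨D, hD⟩ := hq
    refine ⟨C + D, fun x => le_trans ?_ (add_le_add (hC x) (hD x))⟩
    rw [Polynomial.eval_add, ← add_mul]
    gcongr
    exact abs_add_le _ _
  | monomial n a =>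
    refine ⟨|a| * (n.factorial * Real.exp (1 / (4 * b))), fun x => ?_⟩
    rw [Polynomial.eval_monomial, abs_mul, abs_pow, mul_assoc]
    exact mul_le_mul_of_nonneg_left (abs_pow_mul_exp_neg_mul_sq_le hb n x) (abs_nonneg a)

/-- The density `(2π)^(-1/2) exp (-x² / 2)` of the standard Gaussian as a Schwartz function. -/
def stdGaussianSchwartz : 𝓢(ℝ, ℝ) :=
  (√(2 * Real.pi))⁻¹ •
    { toFun x := Real.exp (-(x ^ 2 / 2))
      smooth' := by fun_prop
      decay' k n := by
        obtain ⟨C, hC⟩ := exists_abs_eval_mul_exp_neg_mul_sq_le one_half_pos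
          (Polynomial.X ^ k * (Polynomial.hermite n).map (Int.castRingHom ℝ))
        refine ⟨C, fun x => le_trans (le_of_eq ?_) (hC x)⟩
        rw [norm_iteratedFDeriv_eq_norm_iteratedDeriv, iteratedDeriv_eq_iterate,
          Polynomial.deriv_gaussian_eq_hermite_mul_gaussian]
        simp [Polynomial.aeval_def, Polynomial.eval_map, abs_mul, mul_assoc, div_eq_inv_mul] }

lemma stdGaussianSchwartz_apply (x : ℝ) : stdGaussianSchwartz x = gaussianPDFReal 0 1 x := by
  simp only [gaussianPDFReal, sub_zero, NNReal.coe_one, mul_one, neg_div]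
  rfl

lemma gsmooth_eq_convolution (σ : ℝ → ℝ) {v : ℝ} (hv : 0 < v) :
    gsmooth σ v = fun t => ((fun x => σ (√v * x)) ⋆ stdGaussianSchwartz) ((√v)⁻¹ * t) := by
  have hs : √v ≠ 0 := (Real.sqrt_pos.2 hv).ne'
  have scale : gaussianReal 0 v.toNNReal = (gaussianReal 0 1).map (√v * ·) := by
    rw [gaussianReal_map_const_mul]
    congr 1
    · simp
    · ext; simp [Real.sq_sqrt, hv.le]
  funext t
  calc gsmooth σ v t
      = ∫ y, σ (√v * y + t) ∂gaussianReal 0 1 := by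
        rw [gsmooth, scale, (measurableEmbedding_mulLeft₀ hs).integral_map]
    _ = ∫ y, gaussianPDFReal 0 1 y * σ (√v * (y + (√v)⁻¹ * t)) := by
        rw [integral_gaussianReal_eq_integral_smul one_ne_zero]
        simp [mul_add, hs]
    _ = ∫ x, gaussianPDFReal 0 1 (x - (√v)⁻¹ * t) * σ (√v * x) := by
        rw [← integral_sub_right_eq_self _ ((√v)⁻¹ * t)]
        simp
    _ = ((fun x => σ (√v * x)) ⋆ stdGaussianSchwartz) ((√v)⁻¹ * t) := by
        refine integral_congr_ae (.of_forall fun x => ?_)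
        simp [stdGaussianSchwartz_apply, gaussianPDFReal, mul_comm, sub_sq_comm]

end Gaussian

section Smoothing

lemma PolyBounded.exists_abs_le_mul_one_add_abs_pow {σ : ℝ → ℝ} (hσ : PolyBounded σ) :
    ∃ (B : ℝ) (c : ℕ), ∀ x, |σ x| ≤ B * (1 + |x|) ^ c := by
  obtain ⟨C, hC, c, -, h⟩ := hσ
  refine ⟨2 * C, c, fun x => (h x).trans ?_⟩
  have pow_le : |x| ^ c ≤ (1 + |x|) ^ c := by gcongr; linarith
  have one_le : 1 ≤ (1 + |x|) ^ c := one_le_pow₀ (by linarith [abs_nonneg x])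
  nlinarith

lemma one_add_mul_pow_le {s y : ℝ} (hs : 0 ≤ s) (hy : 0 ≤ y) (n : ℕ) :
    (1 + s * y) ^ n ≤ (1 + s) ^ n * (1 + y) ^ n := by
  rw [← mul_pow]
  gcongr
  nlinarith

lemma one_add_abs_pow_le_mul_pow_two_mul_add (t : ℝ) (n : ℕ) :
    (1 + |t|) ^ n ≤ 2 ^ (2 * n - 1) * t ^ (2 * n) + 2 ^ (2 * n - 1) :=
  calc (1 + |t|) ^ n ≤ (1 + |t|) ^ (2 * n) :=
        pow_le_pow_right₀ (by linarith [abs_nonneg t]) (by omega)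
    _ ≤ 2 ^ (2 * n - 1) * (1 ^ (2 * n) + |t| ^ (2 * n)) :=
        add_pow_le zero_le_one (abs_nonneg t) _
    _ = 2 ^ (2 * n - 1) * t ^ (2 * n) + 2 ^ (2 * n - 1) := by
        rw [(even_two_mul n).pow_abs]
        ring

variable {σ : ℝ → ℝ} {B : ℝ} {c : ℕ}

lemma norm_comp_const_mul_le (hσ : ∀ x, |σ x| ≤ B * (1 + |x|) ^ c) {s : ℝ} (hs : 0 ≤ s) (x : ℝ) :
    ‖σ (s * x)‖ ≤ B * (1 + s) ^ c * (1 + ‖x‖) ^ c := by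
  have hB : 0 ≤ B := by simpa using (abs_nonneg _).trans (hσ 0)
  calc ‖σ (s * x)‖ ≤ B * (1 + s * |x|) ^ c := by simpa [abs_mul, abs_of_nonneg hs] using hσ (s * x)
    _ ≤ B * ((1 + s) ^ c * (1 + |x|) ^ c) := by
        gcongr; exact one_add_mul_pow_le hs (abs_nonneg x) c
    _ = B * (1 + s) ^ c * (1 + ‖x‖) ^ c := (mul_assoc _ _ _).symm

lemma iteratedDeriv_gsmooth (hmeas : AEMeasurable σ) (hσ : ∀ x, |σ x| ≤ B * (1 + |x|) ^ c)
    (k : ℕ) {v : ℝ} (hv : 0 < v) (t : ℝ) :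
    iteratedDeriv k (gsmooth σ v) t = (√v)⁻¹ ^ k *
      ((fun x => σ (√v * x)) ⋆ (SchwartzMap.derivCLM ℝ ℝ)^[k] stdGaussianSchwartz)
        ((√v)⁻¹ * t) := by
  have hs : √v ≠ 0 := (Real.sqrt_pos.2 hv).ne'
  have scaled_meas : AEStronglyMeasurable (fun x => σ (√v * x)) := by
    refine ((measurableEmbedding_mulLeft₀ hs).aemeasurable_map_iff.1 ?_).aestronglyMeasurable
    rw [Real.map_volume_mul_left hs]
    exact hmeas.smul_measure _
  have scaled_bound := norm_comp_const_mul_le hσ v.sqrt_nonneg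
  rw [gsmooth_eq_convolution σ hv, iteratedDeriv_comp_const_mul
    (contDiff_convolution_schwartz _ scaled_meas scaled_bound _),
    iteratedDeriv_convolution_schwartz _ scaled_meas scaled_bound]

lemma exists_abs_iteratedDeriv_gsmooth_le (hmeas : AEMeasurable σ)
    (hσ : ∀ x, |σ x| ≤ B * (1 + |x|) ^ c) (k : ℕ) :
    ∃ A ≥ 0, ∃ n : ℕ, ∀ v, 0 < v → ∀ t, |iteratedDeriv k (gsmooth σ v) t| ≤
      A * ((√v)⁻¹ ^ k * (1 + √v) ^ c * (1 + (√v)⁻¹) ^ n) * (1 + |t|) ^ n := by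
  obtain ⟨A, hA, n, bound⟩ := exists_norm_convolution_schwartz_le (ContinuousLinearMap.lsmul ℝ ℝ)
    volume ((SchwartzMap.derivCLM ℝ ℝ)^[k] stdGaussianSchwartz) c
  have hB : 0 ≤ B := by simpa using (abs_nonneg _).trans (hσ 0)
  refine ⟨A * B, by positivity, n, fun v hv t => ?_⟩
  have scaled_bound := bound _ _ (norm_comp_const_mul_le hσ v.sqrt_nonneg) ((√v)⁻¹ * t)
  rw [iteratedDeriv_gsmooth hmeas hσ k hv, abs_mul, abs_of_nonneg (by positivity)]
  calc _ ≤ (√v)⁻¹ ^ k * (A * (B * (1 + √v) ^ c) * (1 + ‖(√v)⁻¹ * t‖) ^ n) := by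
        gcongr; exact scaled_bound
    _ = (√v)⁻¹ ^ k * (A * (B * (1 + √v) ^ c) * (1 + (√v)⁻¹ * |t|) ^ n) := by
        rw [norm_mul, Real.norm_of_nonneg (by positivity), Real.norm_eq_abs]
    _ ≤ (√v)⁻¹ ^ k * (A * (B * (1 + √v) ^ c) * ((1 + (√v)⁻¹) ^ n * (1 + |t|) ^ n)) := by
        gcongr; exact one_add_mul_pow_le (by positivity) (abs_nonneg t) n
    _ = A * B * ((√v)⁻¹ ^ k * (1 + √v) ^ c * (1 + (√v)⁻¹) ^ n) * (1 + |t|) ^ n := by ring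

end Smoothing

theorem gsmooth_iteratedDeriv_polyBounded_general {σ : ℝ → ℝ} (hmeas : AEMeasurable σ)
    (hpb : PolyBounded σ) (k : ℕ) {K : Set ℝ} (hK : IsCompact K) (hpos : ∀ v ∈ K, 0 < v) :
    ∃ C : ℝ, 0 < C ∧ ∃ ℓ : ℕ, ∀ t : ℝ, ∀ v ∈ K,
      |iteratedDeriv k (gsmooth σ v) t| ≤ C * t ^ (2 * ℓ) + C := by
  obtain ⟨B, c, hσ⟩ := hpb.exists_abs_le_mul_one_add_abs_pow
  obtain ⟨A, hA, n, bound⟩ := exists_abs_iteratedDeriv_gsmooth_le hmeas hσ k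
  set Q : ℝ → ℝ := fun v => (√v)⁻¹ ^ k * (1 + √v) ^ c * (1 + (√v)⁻¹) ^ n
  have Q_continuousOn : ContinuousOn Q K := by
    have sqrt_ne_zero : ∀ v ∈ K, √v ≠ 0 := fun v hv => (Real.sqrt_pos.2 (hpos v hv)).ne'
    fun_prop (disch := assumption)
  obtain ⟨D, hD⟩ := hK.exists_bound_of_continuousOn Q_continuousOn
  refine ⟨A * |D| * 2 ^ (2 * n - 1) + 1, by positivity, n, fun t v hv => ?_⟩
  have Q_le : Q v ≤ |D| := (le_abs_self _).trans ((hD v hv).trans (le_abs_self D))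
  calc |iteratedDeriv k (gsmooth σ v) t| ≤ A * Q v * (1 + |t|) ^ n := bound v (hpos v hv) t
    _ ≤ A * |D| * (2 ^ (2 * n - 1) * t ^ (2 * n) + 2 ^ (2 * n - 1)) := by
        gcongr; exact one_add_abs_pow_le_mul_pow_two_mul_add t n
    _ ≤ A * |D| * (2 ^ (2 * n - 1) * t ^ (2 * n) + 2 ^ (2 * n - 1)) + (t ^ (2 * n) + 1) := by
        have := (even_two_mul n).pow_nonneg t
        linarith
    _ = (A * |D| * 2 ^ (2 * n - 1) + 1) * t ^ (2 * n) + (A * |D| * 2 ^ (2 * n - 1) + 1) := by ring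

/-- For measurable, polynomially bounded `σ`, every derivative
`Σ_v^{(k)}` of the `v`-Gaussian smoothing is polynomially bounded; moreover the bound
can be taken uniform over `v ∈ [1/2, 1]`: `|Σ_v^{(k)}(t)| ≤ C t^{2ℓ} + C`. -/
theorem gsmooth_iteratedDeriv_polyBounded
    (σ : ℝ → ℝ) (hmeas : Measurable σ) (hpb : PolyBounded σ) (k : ℕ) :
    (∀ v : ℝ, 0 < v → ∃ C : ℝ, 0 < C ∧ ∃ ℓ : ℕ,
        ∀ t : ℝ, |iteratedDeriv k (gsmooth σ v) t| ≤ C * |t| ^ ℓ + C) ∧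
      ∃ C : ℝ, 0 < C ∧ ∃ ℓ : ℕ, ∀ t : ℝ, ∀ v : ℝ, 1 / 2 ≤ v → v ≤ 1 →
        |iteratedDeriv k (gsmooth σ v) t| ≤ C * t ^ (2 * ℓ) + C := by
  refine ⟨fun v hv => ?_, ?_⟩
  · obtain ⟨C, hC, ℓ, h⟩ := gsmooth_iteratedDeriv_polyBounded_general hmeas.aemeasurable hpb k
      (isCompact_singleton (x := v)) (by simpa using hv)
    exact ⟨C, hC, 2 * ℓ, fun t => by simpa [(even_two_mul ℓ).pow_abs] using h t v rfl⟩
  · obtain ⟨C, hC, ℓ, h⟩ := gsmooth_iteratedDeriv_polyBounded_general hmeas.aemeasurable hpb k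
      (isCompact_Icc (a := 1 / 2) (b := 1)) fun v hv => one_half_pos.trans_le hv.1
    exact ⟨C, hC, ℓ, fun t v h₁ h₂ => h t v ⟨h₁, h₂⟩⟩
end
end

section
/- Let σ : ℝ → ℝ be measurable and polynomially bounded. Then for every fixed k ∈ ℕ, |Σ_{1-ε}^{(k)}(0) − Σ_1^{(k)}(0)| = O(ε) as ε → 0⁺, where Σ_v denotes the v-Gaussian smoothing of σ and Σ_v^{(k)} its k-th derivative. -/
open MeasureTheory ProbabilityTheory Filter Finset Asymptotics
open scoped NNReal ENNReal

noncomputable section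

/-!
The density `φ_v` of `N(0, v)` solves the heat equation `∂_v φ_v = φ_v'' / 2`, and so do its
spatial derivatives `φ_v⁽ⁿ⁾`. Each of these is dominated, locally uniformly in `v`, by `exp (-b u²)`
for every `b < 1 / (2 v)`. Hence if `σ` is integrable against `exp (-b x²)`, both derivatives of
`Σ_v⁽ⁿ⁾(t) = (-1)ⁿ ∫ σ(x) φ_v⁽ⁿ⁾(x - t) dx` may be taken under the integral, and
`∂_v Σ_v⁽ⁿ⁾ = Σ_v⁽ⁿ⁺²⁾ / 2`. Being differentiable in `v`, the derivative `Σ_v⁽ⁿ⁾(t)` moves by `O(ε)`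
when `v` moves by `ε`.
-/

open Topology
open Real (exp)
open scoped Real

section GaussianDomination

variable {a b : ℝ}

lemma exists_abs_mul_exp_neg_mul_sq_le (hba : b < a) :
    ∃ K, ∀ u, |u| * exp (-a * u ^ 2) ≤ K * exp (-b * u ^ 2) := by
  have hδ : 0 < a - b := sub_pos.mpr hba
  refine ⟨1 + (a - b)⁻¹, fun u => ?_⟩
  have abs_le : |u| ≤ (1 + (a - b)⁻¹) * exp ((a - b) * u ^ 2) := calc
    |u| ≤ 1 + u ^ 2 := by nlinarith [sq_abs u, sq_nonneg (|u| - 1)]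
    _ ≤ 1 + u ^ 2 + ((a - b) * u ^ 2 + (a - b)⁻¹) := le_add_of_nonneg_right (by positivity)
    _ = (1 + (a - b)⁻¹) * ((a - b) * u ^ 2 + 1) := by field_simp; ring
    _ ≤ (1 + (a - b)⁻¹) * exp ((a - b) * u ^ 2) := by gcongr; exact Real.add_one_le_exp _
  calc |u| * exp (-a * u ^ 2)
      ≤ (1 + (a - b)⁻¹) * exp ((a - b) * u ^ 2) * exp (-a * u ^ 2) := by gcongr
    _ = (1 + (a - b)⁻¹) * exp (-b * u ^ 2) := by
        rw [mul_assoc, ← Real.exp_add]; ring_nf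

lemma exp_neg_mul_sub_sq_le (hba : b < a) (x s : ℝ) :
    exp (-a * (x - s) ^ 2) ≤ exp (a * b * s ^ 2 / (a - b)) * exp (-b * x ^ 2) := by
  have hδ : 0 < a - b := sub_pos.mpr hba
  have complete_square : a * b * s ^ 2 / (a - b) + -b * x ^ 2 - -a * (x - s) ^ 2 =
      ((a - b) * x - a * s) ^ 2 / (a - b) := by field_simp; ring
  rw [← Real.exp_add, Real.exp_le_exp, ← sub_nonneg, complete_square]
  positivity

end GaussianDomination

/-- The density of `N(0, v)` at `u`, i.e. the fundamental solution of `∂_v = ∂_u² / 2`. Unlike in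
`gaussianPDFReal`, the variance is a real number, so that one can differentiate in it; for `v ≤ 0`
the square root makes the kernel vanish. -/
def heatKernel (v u : ℝ) : ℝ := (√(2 * π * v))⁻¹ * exp (-u ^ 2 / (2 * v))

section HeatKernel

variable {v : ℝ}

lemma gaussianPDFReal_toNNReal (hv : 0 ≤ v) (m x : ℝ) :
    gaussianPDFReal m v.toNNReal x = heatKernel v (x - m) := by
  rw [gaussianPDFReal, heatKernel, Real.coe_toNNReal v hv]

lemma contDiff_heatKernel (v : ℝ) {n : WithTop ℕ∞} : ContDiff ℝ n (heatKernel v) := by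
  unfold heatKernel
  fun_prop

lemma continuous_iteratedDeriv_heatKernel_sub (n : ℕ) (v t : ℝ) :
    Continuous fun x => iteratedDeriv n (heatKernel v) (x - t) :=
  ((contDiff_heatKernel v).continuous_iteratedDeriv n le_rfl).comp (continuous_sub_right t)

lemma hasDerivAt_iteratedDeriv_heatKernel (n : ℕ) (v u : ℝ) :
    HasDerivAt (iteratedDeriv n (heatKernel v)) (iteratedDeriv (n + 1) (heatKernel v) u) u := by
  rw [iteratedDeriv_succ]
  exact ((contDiff_heatKernel v).differentiable_iteratedDeriv n
    (WithTop.coe_lt_coe.mpr (ENat.natCast_lt_top n)) u).hasDerivAt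

lemma deriv_heatKernel (v u : ℝ) : deriv (heatKernel v) u = -(u * heatKernel v u) / v := by
  have hexp : HasDerivAt (fun u => exp (-u ^ 2 / (2 * v)))
      (exp (-u ^ 2 / (2 * v)) * (-(2 * u) / (2 * v))) u := by
    simpa using ((hasDerivAt_pow 2 u).neg.div_const (2 * v)).exp
  refine (hexp.const_mul (√(2 * π * v))⁻¹).deriv.trans ?_
  rw [← mul_neg, mul_div_mul_left _ _ two_ne_zero, heatKernel]
  ring

/-- The three-term recurrence of the (rescaled) Hermite polynomials `φ_v⁽ⁿ⁾ / φ_v`. At `n = 0` the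
truncated `n - 1` is harmless because its coefficient vanishes. -/
lemma iteratedDeriv_succ_heatKernel (n : ℕ) (v u : ℝ) :
    iteratedDeriv (n + 1) (heatKernel v) u =
      -(u * iteratedDeriv n (heatKernel v) u + n * iteratedDeriv (n - 1) (heatKernel v) u) / v := by
  induction n generalizing u with
  | zero => simp [deriv_heatKernel]
  | succ n ih =>
    have hasDerivAt_rhs := (((hasDerivAt_id u).mul (hasDerivAt_iteratedDeriv_heatKernel n v u)).add
      ((hasDerivAt_iteratedDeriv_heatKernel (n - 1) v u).const_mul (n : ℝ))).neg.div_const v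
    rw [(hasDerivAt_iteratedDeriv_heatKernel (n + 1) v u).unique
      (hasDerivAt_rhs.congr_of_eventuallyEq (.of_forall ih))]
    rcases n with _ | n
    · simp [add_comm]
    · simp only [add_tsub_cancel_right, id_eq]
      push_cast
      ring

lemma hasDerivAt_heatKernel_variance (hv : 0 < v) (u : ℝ) :
    HasDerivAt (fun w => heatKernel w u) (iteratedDeriv 2 (heatKernel v) u / 2) v := by
  have hsqrt : HasDerivAt (fun w => (√(2 * π * w))⁻¹)
      (-(2 * π / (2 * √(2 * π * v))) / √(2 * π * v) ^ 2) v := by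
    simpa using (((hasDerivAt_id v).const_mul (2 * π)).sqrt (by positivity)).fun_inv
      (by positivity)
  have hexp : HasDerivAt (fun w => exp (-u ^ 2 / (2 * w)))
      (exp (-u ^ 2 / (2 * v)) * (u ^ 2 / (2 * v ^ 2))) v := by
    have := ((hasDerivAt_const v (-u ^ 2)).fun_div ((hasDerivAt_id v).const_mul 2)
      (by simpa using hv.ne')).exp
    refine this.congr_deriv ?_
    simp only [id_eq]
    field_simp
    ring
  refine (hsqrt.mul hexp).congr_deriv ?_
  have hsq : √(2 * π * v) ^ 2 = 2 * π * v := Real.sq_sqrt (by positivity)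
  simp only [iteratedDeriv_succ_heatKernel 1, iteratedDeriv_succ_heatKernel 0, tsub_self,
    iteratedDeriv_zero, heatKernel, hsq]
  field_simp
  push_cast
  ring

lemma hasDerivAt_iteratedDeriv_heatKernel_variance (hv : 0 < v) (n : ℕ) (u : ℝ) :
    HasDerivAt (fun w => iteratedDeriv n (heatKernel w) u)
      (iteratedDeriv (n + 2) (heatKernel v) u / 2) v := by
  induction n using Nat.strong_induction_on with
  | _ n ih =>
    rcases n with _ | n
    · simpa using hasDerivAt_heatKernel_variance hv u
    have hasDerivAt_rhs := ((((ih n (by lia)).const_mul u).add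
      ((ih (n - 1) (by lia)).const_mul (n : ℝ))).neg).fun_div (hasDerivAt_id v) hv.ne'
    have index_shift : (n : ℝ) * iteratedDeriv (n - 1 + 2) (heatKernel v) u =
        n * iteratedDeriv (n + 1) (heatKernel v) u := by
      rcases n with _ | n <;> simp
    rw [funext fun w => iteratedDeriv_succ_heatKernel n w u]
    refine hasDerivAt_rhs.congr_deriv ?_
    have hsucc := iteratedDeriv_succ_heatKernel n v u
    have hsucc_add_two : iteratedDeriv (n + 1 + 2) (heatKernel v) u =
        -(u * iteratedDeriv (n + 2) (heatKernel v) u +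
          (n + 2) * iteratedDeriv (n + 1) (heatKernel v) u) / v := by
      exact_mod_cast iteratedDeriv_succ_heatKernel (n + 2) v u
    simp only [Pi.neg_apply, Pi.add_apply, id_eq]
    rw [hsucc_add_two]
    rw [eq_div_iff hv.ne'] at hsucc
    field_simp
    linear_combination -v * index_shift + 2 * hsucc

lemma abs_iteratedDeriv_succ_heatKernel_le (hv : 0 ≤ v) (n : ℕ) (u : ℝ) :
    |iteratedDeriv (n + 1) (heatKernel v) u| ≤
      v⁻¹ * (|u| * |iteratedDeriv n (heatKernel v) u| +
        n * |iteratedDeriv (n - 1) (heatKernel v) u|) := by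
  rw [iteratedDeriv_succ_heatKernel, abs_div, abs_neg, abs_of_nonneg hv, div_eq_inv_mul]
  gcongr
  simpa only [abs_mul, Nat.abs_cast] using abs_add_le (u * iteratedDeriv n (heatKernel v) u)
    (n * iteratedDeriv (n - 1) (heatKernel v) u)

lemma exists_eventually_heatKernel_le (hv : 0 < v) {a : ℝ} (ha : a < (2 * v)⁻¹) :
    ∃ K, ∀ᶠ w in 𝓝 v, ∀ u, heatKernel w u ≤ K * exp (-a * u ^ 2) := by
  have hsqrt : ContinuousAt (fun w => (√(2 * π * w))⁻¹) v :=
    ContinuousAt.inv₀ (by fun_prop) (by positivity)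
  have hinv : ContinuousAt (fun w => (2 * w)⁻¹) v := ContinuousAt.inv₀ (by fun_prop) (by positivity)
  refine ⟨(√(2 * π * v))⁻¹ + 1, ?_⟩
  filter_upwards [hsqrt.eventually_le_const (lt_add_one _), hinv.eventually_const_le ha]
    with w hw haw u
  have hexp : -u ^ 2 / (2 * w) ≤ -a * u ^ 2 := by
    rw [div_eq_mul_inv]
    nlinarith [sq_nonneg u]
  unfold heatKernel
  gcongr

lemma exists_eventually_abs_iteratedDeriv_heatKernel_le (hv : 0 < v) (n : ℕ) {b : ℝ}
    (hb : b < (2 * v)⁻¹) :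
    ∃ K, ∀ᶠ w in 𝓝 v, ∀ u, |iteratedDeriv n (heatKernel w) u| ≤ K * exp (-b * u ^ 2) := by
  induction n using Nat.strong_induction_on generalizing b with
  | _ n ih =>
    rcases n with _ | n
    · obtain ⟨K, hK⟩ := exists_eventually_heatKernel_le hv hb
      refine ⟨K, hK.mono fun w hw u => ?_⟩
      rw [iteratedDeriv_zero, abs_of_nonneg (by unfold heatKernel; positivity)]
      exact hw u
    obtain ⟨a, hba, hav⟩ := exists_between hb
    obtain ⟨L, abs_mul_le⟩ := exists_abs_mul_exp_neg_mul_sq_le hba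
    obtain ⟨K₁, hK₁⟩ := ih n (by lia) hav
    obtain ⟨K₂, hK₂⟩ := ih (n - 1) (by lia) hb
    have hinv : ContinuousAt (fun w : ℝ => w⁻¹) v := continuousAt_inv₀ hv.ne'
    refine ⟨(v⁻¹ + 1) * (K₁ * L + n * K₂), ?_⟩
    filter_upwards [hK₁, hK₂, hinv.eventually_le_const (lt_add_one _), eventually_gt_nhds hv]
      with w h₁ h₂ hwinv hw u
    have hK₁_nonneg : 0 ≤ K₁ := by simpa using (abs_nonneg _).trans (h₁ 0)
    have first_term : |u| * |iteratedDeriv n (heatKernel w) u| ≤ K₁ * L * exp (-b * u ^ 2) := calc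
      _ ≤ |u| * (K₁ * exp (-a * u ^ 2)) := by gcongr; exact h₁ u
      _ = K₁ * (|u| * exp (-a * u ^ 2)) := by ring
      _ ≤ K₁ * (L * exp (-b * u ^ 2)) := mul_le_mul_of_nonneg_left (abs_mul_le u) hK₁_nonneg
      _ = K₁ * L * exp (-b * u ^ 2) := by ring
    calc |iteratedDeriv (n + 1) (heatKernel w) u|
        ≤ w⁻¹ * (|u| * |iteratedDeriv n (heatKernel w) u| +
            n * |iteratedDeriv (n - 1) (heatKernel w) u|) :=
          abs_iteratedDeriv_succ_heatKernel_le hw.le n u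
      _ ≤ (v⁻¹ + 1) * (K₁ * L * exp (-b * u ^ 2) + n * (K₂ * exp (-b * u ^ 2))) := by
          gcongr
          exact h₂ u
      _ = (v⁻¹ + 1) * (K₁ * L + n * K₂) * exp (-b * u ^ 2) := by ring

lemma exists_eventually_abs_iteratedDeriv_heatKernel_sub_le (hv : 0 < v) (n : ℕ) {b : ℝ}
    (hb : b < (2 * v)⁻¹) (t : ℝ) :
    ∃ K, ∀ᶠ p in 𝓝 (v, t), ∀ x,
      |iteratedDeriv n (heatKernel p.1) (x - p.2)| ≤ K * exp (-b * x ^ 2) := by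
  obtain ⟨a, hba, hav⟩ := exists_between hb
  obtain ⟨K, hK⟩ := exists_eventually_abs_iteratedDeriv_heatKernel_le hv n hav
  have hshift : ContinuousAt (fun s => exp (a * b * s ^ 2 / (a - b))) t := by fun_prop
  refine ⟨K * (exp (a * b * t ^ 2 / (a - b)) + 1), ?_⟩
  filter_upwards [hK.prod_nhds (hshift.eventually_le_const (lt_add_one _))] with ⟨w, s⟩ ⟨hw, hs⟩ x
  have hK_nonneg : 0 ≤ K := by simpa using (abs_nonneg _).trans (hw 0)
  calc |iteratedDeriv n (heatKernel w) (x - s)|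
      ≤ K * exp (-a * (x - s) ^ 2) := hw _
    _ ≤ K * (exp (a * b * s ^ 2 / (a - b)) * exp (-b * x ^ 2)) := by
        gcongr; exact exp_neg_mul_sub_sq_le hba x s
    _ ≤ K * ((exp (a * b * t ^ 2 / (a - b)) + 1) * exp (-b * x ^ 2)) := by gcongr
    _ = _ := by ring

end HeatKernel

lemma hasDerivAt_integral_mul_of_abs_deriv_le {α : Type*} [MeasurableSpace α] {μ : Measure α}
    {σ g : α → ℝ} {F F' : ℝ → α → ℝ} {K p₀ : ℝ} (hσ : AEStronglyMeasurable σ μ)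
    (hσg : Integrable (fun x => σ x * g x) μ)
    (hF_meas : ∀ p, AEStronglyMeasurable (F p) μ) (hF'_meas : AEStronglyMeasurable (F' p₀) μ)
    (hF_int : Integrable (fun x => σ x * F p₀ x) μ)
    (hbound : ∀ᶠ p in 𝓝 p₀, ∀ x, |F' p x| ≤ K * g x)
    (hderiv : ∀ᶠ p in 𝓝 p₀, ∀ x, HasDerivAt (fun q => F q x) (F' p x) p) :
    HasDerivAt (fun p => ∫ x, σ x * F p x ∂μ) (∫ x, σ x * F' p₀ x ∂μ) p₀ := by
  refine (hasDerivAt_integral_of_dominated_loc_of_deriv_le (hbound.and hderiv)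
    (.of_forall fun p => hσ.mul (hF_meas p)) hF_int (hσ.mul hF'_meas)
    (bound := fun x => |K| * |σ x * g x|) (ae_of_all _ fun x p hp => ?_)
    (hσg.abs.const_mul _) (ae_of_all _ fun x p hp => (hp.2 x).const_mul (σ x))).2
  calc ‖σ x * F' p x‖ = |σ x| * |F' p x| := abs_mul _ _
    _ ≤ |σ x| * |K * g x| :=
        mul_le_mul_of_nonneg_left ((hp.1 x).trans (le_abs_self _)) (abs_nonneg _)
    _ = |K| * |σ x * g x| := by rw [abs_mul, abs_mul]; ring

section GaussianSmoothing

variable {σ : ℝ → ℝ} {b v : ℝ}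

lemma gsmooth_eq_integral_heatKernel (σ : ℝ → ℝ) (hv : 0 < v) (t : ℝ) :
    gsmooth σ v t = ∫ x, σ x * heatKernel v (x - t) := by
  have hv' : v.toNNReal ≠ 0 := (Real.toNNReal_pos.mpr hv).ne'
  rw [gsmooth, integral_gaussianReal_eq_integral_smul hv', ← integral_sub_right_eq_self _ t]
  simp only [gaussianPDFReal_toNNReal hv.le, sub_zero, sub_add_cancel, smul_eq_mul, mul_comm]

lemma aestronglyMeasurable_of_integrable_mul_exp
    (hσ : Integrable fun x => σ x * exp (-b * x ^ 2)) : AEStronglyMeasurable σ := by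
  have hexp : Continuous fun x => exp (b * x ^ 2) := by fun_prop
  refine (hσ.aestronglyMeasurable.mul hexp.aestronglyMeasurable).congr (.of_forall fun x => ?_)
  simp [mul_assoc, ← Real.exp_add]

lemma integrable_mul_iteratedDeriv_heatKernel (hv : 0 < v) (hb : b < (2 * v)⁻¹)
    (hσ : Integrable fun x => σ x * exp (-b * x ^ 2)) (n : ℕ) (t : ℝ) :
    Integrable fun x => σ x * iteratedDeriv n (heatKernel v) (x - t) := by
  obtain ⟨K, hK⟩ := exists_eventually_abs_iteratedDeriv_heatKernel_sub_le hv n hb t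
  refine (hσ.const_mul K).mono ((aestronglyMeasurable_of_integrable_mul_exp hσ).mul
    (continuous_iteratedDeriv_heatKernel_sub n v t).aestronglyMeasurable) (ae_of_all _ fun x => ?_)
  calc ‖σ x * iteratedDeriv n (heatKernel v) (x - t)‖
      = |σ x| * |iteratedDeriv n (heatKernel v) (x - t)| := abs_mul _ _
    _ ≤ |σ x| * |K * exp (-b * x ^ 2)| :=
        mul_le_mul_of_nonneg_left ((hK.self_of_nhds x).trans (le_abs_self _)) (abs_nonneg _)
    _ = ‖K * (σ x * exp (-b * x ^ 2))‖ := by rw [← abs_mul, Real.norm_eq_abs, mul_left_comm]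

lemma hasDerivAt_integral_mul_iteratedDeriv_heatKernel (hv : 0 < v) (hb : b < (2 * v)⁻¹)
    (hσ : Integrable fun x => σ x * exp (-b * x ^ 2)) (n : ℕ) (t : ℝ) :
    HasDerivAt (fun s => ∫ x, σ x * iteratedDeriv n (heatKernel v) (x - s))
      (-∫ x, σ x * iteratedDeriv (n + 1) (heatKernel v) (x - t)) t := by
  obtain ⟨K, hK⟩ := exists_eventually_abs_iteratedDeriv_heatKernel_sub_le hv (n + 1) hb t
  have key := hasDerivAt_integral_mul_of_abs_deriv_le
    (F' := fun s x => -iteratedDeriv (n + 1) (heatKernel v) (x - s))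
    (aestronglyMeasurable_of_integrable_mul_exp hσ) hσ
    (fun s => (continuous_iteratedDeriv_heatKernel_sub n v s).aestronglyMeasurable)
    (continuous_iteratedDeriv_heatKernel_sub (n + 1) v t).neg.aestronglyMeasurable
    (integrable_mul_iteratedDeriv_heatKernel hv hb hσ n t)
    ((hK.curry_nhds.self_of_nhds).mono fun s hs x => (abs_neg _).trans_le (hs x))
    (.of_forall fun s x => (hasDerivAt_iteratedDeriv_heatKernel n v (x - s)).comp_const_sub x s)
  simpa only [mul_neg, integral_neg] using key

lemma hasDerivAt_integral_mul_iteratedDeriv_heatKernel_variance (hv : 0 < v) (hb : b < (2 * v)⁻¹)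
    (hσ : Integrable fun x => σ x * exp (-b * x ^ 2)) (n : ℕ) (t : ℝ) :
    HasDerivAt (fun w => ∫ x, σ x * iteratedDeriv n (heatKernel w) (x - t))
      ((∫ x, σ x * iteratedDeriv (n + 2) (heatKernel v) (x - t)) / 2) v := by
  obtain ⟨K, hK⟩ := exists_eventually_abs_iteratedDeriv_heatKernel_sub_le hv (n + 2) hb t
  have key := hasDerivAt_integral_mul_of_abs_deriv_le (K := K / 2)
    (F' := fun w x => iteratedDeriv (n + 2) (heatKernel w) (x - t) / 2)
    (aestronglyMeasurable_of_integrable_mul_exp hσ) hσ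
    (fun w => (continuous_iteratedDeriv_heatKernel_sub n w t).aestronglyMeasurable)
    ((continuous_iteratedDeriv_heatKernel_sub (n + 2) v t).div_const 2).aestronglyMeasurable
    (integrable_mul_iteratedDeriv_heatKernel hv hb hσ n t)
    (hK.curry_nhds.mono fun w hw x => ?_)
    ((eventually_gt_nhds hv).mono fun w hw x =>
      hasDerivAt_iteratedDeriv_heatKernel_variance hw n (x - t))
  · simpa only [← mul_div_assoc, integral_div] using key
  · rw [abs_div, abs_two, div_mul_eq_mul_div]
    gcongr
    exact hw.self_of_nhds x

lemma iteratedDeriv_gsmooth_s12 (hv : 0 < v) (hb : b < (2 * v)⁻¹)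
    (hσ : Integrable fun x => σ x * exp (-b * x ^ 2)) (n : ℕ) (t : ℝ) :
    iteratedDeriv n (gsmooth σ v) t =
      (-1) ^ n * ∫ x, σ x * iteratedDeriv n (heatKernel v) (x - t) := by
  induction n generalizing t with
  | zero => simp [gsmooth_eq_integral_heatKernel σ hv]
  | succ n ih =>
    rw [iteratedDeriv_succ, funext ih,
      ((hasDerivAt_integral_mul_iteratedDeriv_heatKernel hv hb hσ n t).const_mul _).deriv]
    ring

theorem hasDerivAt_iteratedDeriv_gsmooth_variance (hv : 0 < v) (hb : b < (2 * v)⁻¹)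
    (hσ : Integrable fun x => σ x * exp (-b * x ^ 2)) (n : ℕ) (t : ℝ) :
    HasDerivAt (fun w => iteratedDeriv n (gsmooth σ w) t)
      (iteratedDeriv (n + 2) (gsmooth σ v) t / 2) v := by
  have hinv : ContinuousAt (fun w => (2 * w)⁻¹) v := ContinuousAt.inv₀ (by fun_prop) (by positivity)
  have eq_integral : (fun w => iteratedDeriv n (gsmooth σ w) t) =ᶠ[𝓝 v]
      fun w => (-1) ^ n * ∫ x, σ x * iteratedDeriv n (heatKernel w) (x - t) := by
    filter_upwards [eventually_gt_nhds hv, hinv.eventually_const_lt hb] with w hw hbw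
    exact iteratedDeriv_gsmooth_s12 hw hbw hσ n t
  have hasDerivAt_rhs :=
    (hasDerivAt_integral_mul_iteratedDeriv_heatKernel_variance hv hb hσ n t).const_mul ((-1) ^ n)
  refine (hasDerivAt_rhs.congr_of_eventuallyEq eq_integral).congr_deriv ?_
  rw [iteratedDeriv_gsmooth_s12 hv hb hσ]
  ring

lemma PolyBounded.integrable_mul_exp_neg_mul_sq (hpb : PolyBounded σ)
    (hσ : AEStronglyMeasurable σ) (hb : 0 < b) : Integrable fun x => σ x * exp (-b * x ^ 2) := by
  obtain ⟨C, -, c, -, hC⟩ := hpb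
  have hpow : Integrable fun x : ℝ => |x| ^ c * exp (-b * x ^ 2) := by
    have := (integrable_rpow_mul_exp_neg_mul_sq hb (s := c)
      (neg_one_lt_zero.trans_le c.cast_nonneg)).abs
    simpa only [Real.rpow_natCast, abs_mul, abs_pow, Real.abs_exp] using this
  have hexp : Continuous fun x => exp (-b * x ^ 2) := by fun_prop
  refine ((hpow.const_mul C).add ((integrable_exp_neg_mul_sq hb).const_mul C)).mono'
    (hσ.mul hexp.aestronglyMeasurable) (ae_of_all _ fun x => ?_)
  calc ‖σ x * exp (-b * x ^ 2)‖ = |σ x| * exp (-b * x ^ 2) := by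
        rw [Real.norm_eq_abs, abs_mul, Real.abs_exp]
    _ ≤ (C * |x| ^ c + C) * exp (-b * x ^ 2) := by gcongr; exact hC x
    _ = C * (|x| ^ c * exp (-b * x ^ 2)) + C * exp (-b * x ^ 2) := by ring

end GaussianSmoothing

theorem gsmooth_iteratedDeriv_continuity_at_one_general {σ : ℝ → ℝ} {b v : ℝ} (hv : 0 < v)
    (hb : b < (2 * v)⁻¹) (hσ : Integrable fun x => σ x * exp (-b * x ^ 2)) (k : ℕ) (t : ℝ) :
    (fun ε : ℝ => iteratedDeriv k (gsmooth σ (v - ε)) t - iteratedDeriv k (gsmooth σ v) t)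
      =O[𝓝 0] (id : ℝ → ℝ) := by
  have hderiv := hasDerivAt_iteratedDeriv_gsmooth_variance hv hb hσ k t
  have tendsto_sub : Tendsto (fun ε => v - ε) (𝓝 0) (𝓝 v) := by
    simpa using tendsto_const_nhds.sub (tendsto_id (α := ℝ) (x := 𝓝 0))
  refine (hderiv.differentiableAt.isBigO_sub.comp_tendsto tendsto_sub).trans ?_
  simpa [Function.comp_def] using (isBigO_refl id (𝓝 0)).neg_left

/-- For measurable, polynomially bounded `σ` and every fixed `k`,
`|Σ_{1-ε}^{(k)}(0) − Σ_1^{(k)}(0)| = O(ε)` as `ε → 0⁺`. -/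
theorem gsmooth_iteratedDeriv_continuity_at_one
    (σ : ℝ → ℝ) (hmeas : Measurable σ) (hpb : PolyBounded σ) (k : ℕ) :
    (fun ε : ℝ =>
        iteratedDeriv k (gsmooth σ (1 - ε)) 0 - iteratedDeriv k (gsmooth σ 1) 0)
      =O[nhdsWithin 0 (Set.Ioi 0)] (id : ℝ → ℝ) :=
  (gsmooth_iteratedDeriv_continuity_at_one_general one_pos (b := 1 / 4) (by norm_num)
    (hpb.integrable_mul_exp_neg_mul_sq hmeas.aestronglyMeasurable (by norm_num)) k 0).mono
    nhdsWithin_le_nhds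
end
end

section
/- Fix k ≥ 1 and n ≥ k. Let w_1,…,w_k, b be i.i.d. N(0,1/n), let x_1,…,x_k be i.i.d. uniform on {±1}, independent of the weights, and let G = Σ_{i=1}^k w_i x_i + b and M(x) = ∏_{i=1}^k x_i. Fix signs τ_1,…,τ_k, s ∈ {±1} and condition on sign(w_i) = τ_i for all i and sign(b) = s. Then for every ν ∈ ℕ: if ν < k the conditional expectation E[M(x)·G^ν | τ, s] = 0, while if ν ≥ k it equals (∏_{i=1}^k τ_i)·s^{(ν-k) mod 2}·C(ν)·n^{-ν/2} for a constant C(ν) > 0 depending only on k and ν (not on n or the signs). -/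
open MeasureTheory ProbabilityTheory Filter Finset Asymptotics
open scoped NNReal ENNReal

noncomputable section

/-- The distribution of `(|w_1|, …, |w_k|, |b|)` is generated from `k + 1` iid `N(0, 1/n)`
variables (of which we take absolute values below). -/
def weightMeasure (n k : ℕ) : Measure ((Fin k → ℝ) × ℝ) :=
  (Measure.pi fun _ : Fin k => gaussianReal 0 (n : ℝ≥0)⁻¹).prod (gaussianReal 0 (n : ℝ≥0)⁻¹)

/-- `G = Σ_{i=1}^k τ_i |w_i| x_i + s |b|`, i.e. `Σ w_i x_i + b` conditioned
on `sign(w_i) = τ_i` and `sign(b) = s`. -/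
def Gval (k : ℕ) (τ : Fin k → ℝ) (s : ℝ) (g : (Fin k → ℝ) × ℝ) (x : Fin k → Bool) : ℝ :=
  ∑ i, τ i * |g.1 i| * bsign (x i) + s * |g.2|

/-- The conditional expectation `E[M_k(x) · F(G) | sign(w) = τ, sign(b) = s]`,
taken over `|w_1|, …, |w_k|, |b|` and uniform `x ∈ {±1}^k`. -/
def condExpFn (n k : ℕ) (τ : Fin k → ℝ) (s : ℝ) (F : ℝ → ℝ) : ℝ :=
  ∫ g : (Fin k → ℝ) × ℝ,
    (bExp k fun x => (∏ i, bsign (x i)) * F (Gval k τ s g x)) ∂ weightMeasure n k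

/-- The conditional moment `E[M_k(x) · G^ν | sign(w) = τ, sign(b) = s]`. -/
def condMoment (n k : ℕ) (τ : Fin k → ℝ) (s : ℝ) (ν : ℕ) : ℝ :=
  condExpFn n k τ s fun z => z ^ ν

/-- `s` is a sign. -/
def IsSign (s : ℝ) : Prop := s = 1 ∨ s = -1

/-- The degree-`P` Taylor remainder of the `v`-Gaussian smoothing `Σ_v` at `0`:
`R(z) = Σ_v(z) − Σ_{ν=0}^P Σ_v^{(ν)}(0)/ν! · z^ν`. -/
def taylorRem (σ : ℝ → ℝ) (v : ℝ) (P : ℕ) (z : ℝ) : ℝ :=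
  gsmooth σ v z -
    ∑ ν ∈ Finset.range (P + 1),
      iteratedDeriv ν (gsmooth σ v) 0 / (ν.factorial : ℝ) * z ^ ν

/-! Expand `G ^ ν` by the multinomial theorem. Averaging `M(x)` against a monomial
`∏ (w_i x_i) ^ m_i` over the cube kills it unless every `m_i` is odd. There is no such exponent
vector of total degree `ν < k`. For `ν ≥ k` each surviving monomial carries the sign
`∏ τ_i * s ^ (ν - k)`, because `m_0 = ν - ∑ m_i` has the parity of `ν - k`, and it integrates to a
product of absolute Gaussian moments of total degree `ν`, which is positive and scales
like `n ^ (-ν / 2)`. -/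

section AbsoluteMoments

/-- The `m`-th absolute moment of the centered Gaussian of variance `v`; the weights and the bias
enter the moment formula only through these. -/
def gaussianAbsMoment (v : ℝ≥0) (m : ℕ) : ℝ := ∫ x, |x| ^ m ∂gaussianReal 0 v

theorem integrable_abs_pow_gaussianReal (μ : ℝ) (v : ℝ≥0) (m : ℕ) :
    Integrable (fun x ↦ |x| ^ m) (gaussianReal μ v) :=
  (memLp_id_gaussianReal' m (by simp)).integrable_norm_pow'

theorem gaussianAbsMoment_pos {v : ℝ≥0} (hv : v ≠ 0) (m : ℕ) : 0 < gaussianAbsMoment v m := by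
  have : (gaussianReal 0 v).IsOpenPosMeasure :=
    (gaussianReal_absolutelyContinuous' 0 hv).isOpenPosMeasure
  exact integral_pos_of_integrable_nonneg_nonzero (x := 1) (by fun_prop)
    (integrable_abs_pow_gaussianReal 0 v m) (fun x ↦ by positivity) (by simp)

theorem gaussianAbsMoment_eq_sqrt_pow_mul (v : ℝ≥0) (m : ℕ) :
    gaussianAbsMoment v m = √v ^ m * gaussianAbsMoment 1 m := by
  have gaussianReal_eq_map : gaussianReal 0 v = (gaussianReal 0 1).map (√(v : ℝ) * ·) := by
    rw [gaussianReal_map_const_mul, mul_zero]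
    congr
    ext
    simp
  unfold gaussianAbsMoment
  rw [gaussianReal_eq_map, integral_map (by fun_prop) (by fun_prop), ← integral_const_mul]
  simp only [abs_mul, mul_pow, abs_of_nonneg (Real.sqrt_nonneg _)]

theorem prod_gaussianAbsMoment {ι : Type*} [Fintype ι] (v : ℝ≥0) (m : ι → ℕ) :
    ∏ j, gaussianAbsMoment v (m j) = √v ^ (∑ j, m j) * ∏ j, gaussianAbsMoment 1 (m j) := by
  simp only [gaussianAbsMoment_eq_sqrt_pow_mul v, prod_mul_distrib, prod_pow_eq_pow_sum]

theorem sqrt_inv_pow_eq_rpow {t : ℝ} (ht : 0 ≤ t) (ν : ℕ) : √(t⁻¹) ^ ν = t ^ (-(ν : ℝ) / 2) := by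
  rw [Real.sqrt_eq_rpow, Real.inv_rpow ht, ← Real.rpow_neg ht, ← Real.rpow_mul_natCast ht]
  ring_nf

end AbsoluteMoments

section WeightMonomials

variable (n k : ℕ) (m : Fin (k + 1) → ℕ)

theorem integrable_prod_abs_pow_weightMeasure :
    Integrable (fun g : (Fin k → ℝ) × ℝ ↦ (∏ i, |g.1 i| ^ m i.succ) * |g.2| ^ m 0)
      (weightMeasure n k) := by
  have hweights : Integrable (fun w : Fin k → ℝ ↦ ∏ i, |w i| ^ m i.succ)
      (Measure.pi fun _ ↦ gaussianReal 0 (n : ℝ≥0)⁻¹) :=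
    Integrable.fintype_prod (f := fun (i : Fin k) (x : ℝ) ↦ |x| ^ m i.succ) fun i ↦
      integrable_abs_pow_gaussianReal 0 _ (m i.succ)
  exact hweights.mul_prod (integrable_abs_pow_gaussianReal 0 _ (m 0))

theorem integral_prod_abs_pow_weightMeasure :
    ∫ g, (∏ i, |g.1 i| ^ m i.succ) * |g.2| ^ m 0 ∂weightMeasure n k =
      ∏ j, gaussianAbsMoment (n : ℝ≥0)⁻¹ (m j) := by
  unfold weightMeasure gaussianAbsMoment
  rw [integral_prod_mul (fun w : Fin k → ℝ ↦ ∏ i, |w i| ^ m i.succ) (fun b ↦ |b| ^ m 0),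
    integral_fintype_prod_eq_prod (fun (i : Fin k) (x : ℝ) ↦ |x| ^ m i.succ),
    Fin.prod_univ_succ, mul_comm]

end WeightMonomials

section OddExponents

/-- The exponent vectors of total degree `ν` whose monomials survive averaging against
`∏ i, x_i`: coordinate `0` is the exponent of the bias and is unconstrained, coordinate `i.succ` is
the exponent of the `i`-th weight and must be odd. -/
def oddExponents (k ν : ℕ) : Finset (Fin (k + 1) → ℕ) :=
  {m ∈ piAntidiag univ ν | ∀ i : Fin k, Odd (m i.succ)}

variable {k ν : ℕ} {m : Fin (k + 1) → ℕ}

theorem mem_oddExponents :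
    m ∈ oddExponents k ν ↔ ∑ j, m j = ν ∧ ∀ i : Fin k, Odd (m i.succ) := by
  simp [oddExponents]

theorem oddExponents_eq_empty (h : ν < k) : oddExponents k ν = ∅ := by
  refine eq_empty_of_forall_notMem fun m hm ↦ h.not_ge ?_
  obtain ⟨hsum, hodd⟩ := mem_oddExponents.1 hm
  calc k = ∑ _i : Fin k, 1 := by simp
    _ ≤ ∑ i : Fin k, m i.succ := sum_le_sum fun i _ ↦ (hodd i).pos
    _ ≤ ∑ j, m j := by simp [Fin.sum_univ_succ]
    _ = ν := hsum

theorem oddExponents_nonempty (h : k ≤ ν) : (oddExponents k ν).Nonempty :=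
  ⟨Fin.cons (ν - k) fun _ ↦ 1, mem_oddExponents.2 (by simp [Fin.sum_univ_succ, h])⟩

theorem apply_zero_mod_two_of_mem_oddExponents (hm : m ∈ oddExponents k ν) :
    m 0 % 2 = (ν - k) % 2 := by
  obtain ⟨hsum, hodd⟩ := mem_oddExponents.1 hm
  choose q hq using hodd
  have hweights : ∑ i : Fin k, m i.succ = 2 * ∑ i, q i + k := by
    simp [hq, sum_add_distrib, mul_sum]
  rw [Fin.sum_univ_succ] at hsum
  lia

theorem IsSign.pow_eq_pow_mod_two {s : ℝ} (hs : IsSign s) (a : ℕ) : s ^ a = s ^ (a % 2) :=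
  pow_eq_pow_mod a (by rcases hs with rfl | rfl <;> norm_num)

theorem IsSign.pow_of_odd {s : ℝ} (hs : IsSign s) {a : ℕ} (ha : Odd a) : s ^ a = s := by
  rw [hs.pow_eq_pow_mod_two, Nat.odd_iff.1 ha, pow_one]

theorem prod_sign_pow_of_mem_oddExponents (hm : m ∈ oddExponents k ν) {τ : Fin k → ℝ}
    (hτ : ∀ i, IsSign (τ i)) {s : ℝ} (hs : IsSign s) :
    (∏ i, τ i ^ m i.succ) * s ^ m 0 = (∏ i, τ i) * s ^ ((ν - k) % 2) := by
  rw [hs.pow_eq_pow_mod_two, apply_zero_mod_two_of_mem_oddExponents hm]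
  simp only [(hτ _).pow_of_odd ((mem_oddExponents.1 hm).2 _)]

end OddExponents

section CubeAverages

theorem bExp_prod (k : ℕ) (f : Fin k → Bool → ℝ) :
    bExp k (fun x ↦ ∏ i, f i (x i)) = ∏ i, (f i true + f i false) / 2 := by
  simp [bExp, ← Fintype.prod_sum, prod_div_distrib]

theorem bExp_finset_sum {ι : Type*} (k : ℕ) (S : Finset ι) (f : ι → (Fin k → Bool) → ℝ) :
    bExp k (fun x ↦ ∑ m ∈ S, f m x) = ∑ m ∈ S, bExp k (f m) := by
  simp only [bExp, sum_div, sum_comm (t := S)]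

theorem bExp_mul_const (k : ℕ) (f : (Fin k → Bool) → ℝ) (c : ℝ) :
    bExp k (fun x ↦ f x * c) = bExp k f * c := by
  simp only [bExp, ← sum_mul, div_mul_eq_mul_div]

theorem bExp_prod_bsign_mul_pow (k : ℕ) (a : Fin k → ℝ) (m : Fin k → ℕ) :
    bExp k (fun x ↦ ∏ i, bsign (x i) * (a i * bsign (x i)) ^ m i) =
      if ∀ i, Odd (m i) then ∏ i, a i ^ m i else 0 := by
  have coordinate_average (i : Fin k) :
      (bsign true * (a i * bsign true) ^ m i + bsign false * (a i * bsign false) ^ m i) / 2 =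
        if Odd (m i) then a i ^ m i else 0 := by
    rcases Nat.even_or_odd (m i) with hm | hm
    · simp [bsign, hm.neg_pow, Nat.not_odd_iff_even.2 hm]
    · simp [bsign, hm.neg_pow, hm]
  rw [bExp_prod k fun i b ↦ bsign b * (a i * bsign b) ^ m i]
  simp only [coordinate_average, prod_ite_zero, mem_univ, true_imp_iff]

theorem sum_add_pow_eq_sum_piAntidiag {R : Type*} [CommSemiring R] {k : ℕ} (a : Fin k → R) (c : R)
    (ν : ℕ) :
    (∑ i, a i + c) ^ ν = ∑ m ∈ piAntidiag (univ : Finset (Fin (k + 1))) ν,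
      (Nat.multinomial univ m : R) * ((∏ i, a i ^ m i.succ) * c ^ m 0) := by
  have := sum_pow_eq_sum_piAntidiag univ (Fin.cons c a : Fin (k + 1) → R) ν
  simpa only [Fin.sum_univ_succ, Fin.prod_univ_succ, Fin.cons_zero, Fin.cons_succ, add_comm c,
    mul_comm (c ^ _)] using this

theorem bExp_prod_bsign_mul_sum_pow (k ν : ℕ) (a : Fin k → ℝ) (c : ℝ) :
    bExp k (fun x ↦ (∏ i, bsign (x i)) * (∑ i, a i * bsign (x i) + c) ^ ν) =
      ∑ m ∈ oddExponents k ν,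
        (Nat.multinomial univ m : ℝ) * ((∏ i, a i ^ m i.succ) * c ^ m 0) := by
  simp only [sum_add_pow_eq_sum_piAntidiag, mul_sum, bExp_finset_sum, oddExponents, sum_filter]
  refine sum_congr rfl fun m _ ↦ ?_
  calc bExp k (fun x ↦ (∏ i, bsign (x i)) * (Nat.multinomial univ m *
          ((∏ i, (a i * bsign (x i)) ^ m i.succ) * c ^ m 0)))
      = bExp k (fun x ↦ (∏ i, bsign (x i) * (a i * bsign (x i)) ^ m i.succ) *
          (Nat.multinomial univ m * c ^ m 0)) := by
        congr! 2 with x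
        rw [prod_mul_distrib]
        ring
    _ = (if ∀ i : Fin k, Odd (m i.succ) then ∏ i, a i ^ m i.succ else 0) *
          (Nat.multinomial univ m * c ^ m 0) := by
        rw [bExp_mul_const, bExp_prod_bsign_mul_pow k a fun i ↦ m i.succ]
    _ = if ∀ i : Fin k, Odd (m i.succ) then
          Nat.multinomial univ m * ((∏ i, a i ^ m i.succ) * c ^ m 0) else 0 := by
        split_ifs <;> ring

end CubeAverages

section ConditionalMoments

theorem condMoment_eq_sum_oddExponents (n k : ℕ) (τ : Fin k → ℝ) (s : ℝ) (ν : ℕ) :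
    condMoment n k τ s ν = ∑ m ∈ oddExponents k ν, (Nat.multinomial univ m : ℝ) *
      ((∏ i, τ i ^ m i.succ) * s ^ m 0) * ∏ j, gaussianAbsMoment (n : ℝ≥0)⁻¹ (m j) := by
  have average_eq_sum (g : (Fin k → ℝ) × ℝ) :
      bExp k (fun x ↦ (∏ i, bsign (x i)) * Gval k τ s g x ^ ν) =
        ∑ m ∈ oddExponents k ν, (Nat.multinomial univ m : ℝ) *
          ((∏ i, τ i ^ m i.succ) * s ^ m 0) * ((∏ i, |g.1 i| ^ m i.succ) * |g.2| ^ m 0) := by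
    unfold Gval
    rw [bExp_prod_bsign_mul_sum_pow k ν (fun i ↦ τ i * |g.1 i|)]
    refine sum_congr rfl fun m _ ↦ ?_
    simp only [mul_pow, prod_mul_distrib]
    ring
  unfold condMoment condExpFn
  simp only [average_eq_sum]
  rw [integral_finsetSum _ fun m _ ↦
    (integrable_prod_abs_pow_weightMeasure n k m).const_mul _]
  simp only [integral_const_mul, integral_prod_abs_pow_weightMeasure]

/-- The constant `C(ν)` of the moment formula: the `ν`-th moment for unit variance and all signs
equal to `1`, written as a sum over the surviving monomials. -/
def momentConst (k ν : ℕ) : ℝ :=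
  ∑ m ∈ oddExponents k ν, (Nat.multinomial univ m : ℝ) * ∏ j, gaussianAbsMoment 1 (m j)

theorem momentConst_pos {k ν : ℕ} (h : k ≤ ν) : 0 < momentConst k ν :=
  sum_pos (fun m _ ↦ mul_pos (Nat.cast_pos.2 (Nat.multinomial_pos univ m))
    (prod_pos fun j _ ↦ gaussianAbsMoment_pos one_ne_zero (m j))) (oddExponents_nonempty h)

theorem condMoment_eq_zero_of_lt {k ν : ℕ} (h : ν < k) (n : ℕ) (τ : Fin k → ℝ) (s : ℝ) :
    condMoment n k τ s ν = 0 := by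
  rw [condMoment_eq_sum_oddExponents, oddExponents_eq_empty h, sum_empty]

theorem condMoment_eq_momentConst (n k ν : ℕ) {τ : Fin k → ℝ} (hτ : ∀ i, IsSign (τ i)) {s : ℝ}
    (hs : IsSign s) :
    condMoment n k τ s ν =
      (∏ i, τ i) * s ^ ((ν - k) % 2) * momentConst k ν * (n : ℝ) ^ (-(ν : ℝ) / 2) := by
  rw [condMoment_eq_sum_oddExponents, momentConst, mul_sum, sum_mul]
  refine sum_congr rfl fun m hm ↦ ?_
  have hscale : ∏ j, gaussianAbsMoment (n : ℝ≥0)⁻¹ (m j) =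
      (n : ℝ) ^ (-(ν : ℝ) / 2) * ∏ j, gaussianAbsMoment 1 (m j) := by
    rw [prod_gaussianAbsMoment, (mem_oddExponents.1 hm).1, NNReal.coe_inv, NNReal.coe_natCast,
      sqrt_inv_pow_eq_rpow n.cast_nonneg]
  rw [prod_sign_pow_of_mem_oddExponents hm hτ hs, hscale]
  ring

end ConditionalMoments

theorem condMoment_formula_general (k ν : ℕ) :
    (ν < k → ∀ (n : ℕ) (τ : Fin k → ℝ) (s : ℝ), condMoment n k τ s ν = 0) ∧
    (k ≤ ν → ∃ C : ℝ, 0 < C ∧ ∀ n : ℕ, 0 < n →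
      ∀ τ : Fin k → ℝ, (∀ i, IsSign (τ i)) → ∀ s : ℝ, IsSign s →
        condMoment n k τ s ν =
          (∏ i, τ i) * s ^ ((ν - k) % 2) * C * (n : ℝ) ^ (-(ν : ℝ) / 2)) :=
  ⟨condMoment_eq_zero_of_lt, fun h ↦ ⟨momentConst k ν, momentConst_pos h,
    fun n _ _ hτ _ hs ↦ condMoment_eq_momentConst n k ν hτ hs⟩⟩

/-- Conditional moments of `M_k(x) · G^ν` given the signs of the weights and
bias: the expectation vanishes for `ν < k`, and for `ν ≥ k` it equals
`(∏ τ_i) · s^{(ν-k) mod 2} · C(ν) · n^{-ν/2}` with `C(ν) > 0` independent of `n` and of the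
signs. -/
theorem condMoment_formula (k : ℕ) (hk : 1 ≤ k) (ν : ℕ) :
    (ν < k → ∀ n : ℕ, k ≤ n → ∀ τ : Fin k → ℝ, (∀ i, IsSign (τ i)) →
      ∀ s : ℝ, IsSign s → condMoment n k τ s ν = 0) ∧
    (k ≤ ν → ∃ C : ℝ, 0 < C ∧ ∀ n : ℕ, k ≤ n →
      ∀ τ : Fin k → ℝ, (∀ i, IsSign (τ i)) → ∀ s : ℝ, IsSign s →
        condMoment n k τ s ν =
          (∏ i, τ i) * s ^ ((ν - k) % 2) * C * (n : ℝ) ^ (-(ν : ℝ) / 2)) := by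
  obtain ⟨hlt, hge⟩ := condMoment_formula_general k ν
  exact ⟨fun h n _ τ _ s _ ↦ hlt h n τ s,
    fun h ↦ (hge h).imp fun _ hC ↦ ⟨hC.1, fun n hn ↦ hC.2 n (hk.trans hn)⟩⟩
end
end

section
/- Let σ : ℝ → ℝ be measurable and polynomially bounded, fix k ≥ 1 and P ≥ k, and for n ≥ 2k set Σ_n := Σ_{1-k/n} and let R_{P,n}(z) := Σ_n(z) − Σ_{ν=0}^P (Σ_n^{(ν)}(0)/ν!)·z^ν be the degree-P Taylor remainder of Σ_n at 0. Let w_1,…,w_k, b be i.i.d. N(0,1/n), x uniform on {±1}^k, G = Σ_{i=1}^k w_i x_i + b, M(x) = ∏_{i=1}^k x_i. Then, conditionally on any fixed values of sign(w_1),…,sign(w_k), sign(b), the conditional expectation over |w_1|,…,|w_k|, |b|, x satisfies E[M(x)·R_{P,n}(G)] = O(n^{-P/2 - 1/2}), uniformly over the conditioned signs. -/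
open MeasureTheory ProbabilityTheory Filter Finset Asymptotics
open scoped NNReal ENNReal

noncomputable section

/-!
Completing the square exhibits `Σ_v` as the restriction to `ℝ` of an entire function. If
`|σ(x)| ≤ A e^{a|x|}`, that function is bounded on the unit circle around `t` by a constant times
`A e^{a|t|}`, uniformly for `v` in compact subsets of `(0, ∞)`; so Cauchy's estimate and the
Lagrange remainder give `|R_{P,n}(z)| ≤ K |z|^{P+1} e^{a|z|}` on all of `ℝ`. Now
`|G| ≤ S := ∑ |w_i| + |b|` whatever the signs and `x`, and `S` has the law of `n^{-1/2}` times a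
copy of itself built from standard Gaussians, so `E[S^{P+1} e^{aS}] = O(n^{-(P+1)/2})`.
-/

/-- `σ` grows at most exponentially: `|σ(x)| ≤ A e^{a|x|}` for some `A` and some `a ≥ 0`. The
remainder estimate is proved for this class, which contains the polynomially bounded functions. -/
def ExpBounded (σ : ℝ → ℝ) : Prop :=
  ∃ A a : ℝ, 0 ≤ a ∧ ∀ x : ℝ, |σ x| ≤ A * Real.exp (a * |x|)

theorem nonneg_of_abs_le_mul_exp {σ : ℝ → ℝ} {A a : ℝ}
    (hbound : ∀ x, |σ x| ≤ A * Real.exp (a * |x|)) : 0 ≤ A := by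
  simpa using (abs_nonneg _).trans (hbound 0)

theorem PolyBounded.expBounded {σ : ℝ → ℝ} (h : PolyBounded σ) : ExpBounded σ := by
  obtain ⟨C, hC, c, -, hσ⟩ := h
  refine ⟨C * (c.factorial + 1), 1, zero_le_one, fun x => (hσ x).trans ?_⟩
  have hpow : |x| ^ c ≤ Real.exp |x| * c.factorial :=
    (div_le_iff₀ (by positivity)).1 (Real.pow_div_factorial_le_exp _ (abs_nonneg x) c)
  have hone : 1 ≤ Real.exp |x| := Real.one_le_exp (abs_nonneg x)
  calc C * |x| ^ c + C ≤ C * (Real.exp |x| * c.factorial) + C * Real.exp |x| := by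
        gcongr
        exact le_mul_of_one_le_right hC.le hone
    _ = C * (c.factorial + 1) * Real.exp (1 * |x|) := by rw [one_mul]; ring

section GaussianExponentialMoments

variable (v : ℝ≥0) (a : ℝ)

theorem integrable_exp_mul_abs_gaussianReal :
    Integrable (fun y => Real.exp (a * |y|)) (gaussianReal 0 v) :=
  integrable_exp_mul_abs (integrable_exp_mul_gaussianReal a) (integrable_exp_mul_gaussianReal (-a))

theorem integral_exp_mul_abs_gaussianReal_le :
    ∫ y, Real.exp (a * |y|) ∂gaussianReal 0 v ≤ 2 * Real.exp (v * a ^ 2 / 2) := by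
  have hmgf (t : ℝ) : ∫ y, Real.exp (t * y) ∂gaussianReal 0 v = Real.exp (v * t ^ 2 / 2) := by
    simpa [mgf] using congrFun (mgf_id_gaussianReal (μ := 0) (v := v)) t
  have hint (t : ℝ) : Integrable (fun y => Real.exp (t * y)) (gaussianReal 0 v) :=
    integrable_exp_mul_gaussianReal t
  have habs (y : ℝ) : Real.exp (a * |y|) ≤ Real.exp (a * y) + Real.exp (-a * y) := by
    rcases abs_choice y with h | h <;> rw [h]
    · exact le_add_of_nonneg_right (Real.exp_nonneg _)
    · rw [mul_neg, ← neg_mul]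
      exact le_add_of_nonneg_left (Real.exp_nonneg _)
  calc ∫ y, Real.exp (a * |y|) ∂gaussianReal 0 v
      ≤ ∫ y, (Real.exp (a * y) + Real.exp (-a * y)) ∂gaussianReal 0 v :=
        integral_mono (integrable_exp_mul_abs_gaussianReal v a) ((hint a).add (hint (-a))) habs
    _ = 2 * Real.exp (v * a ^ 2 / 2) := by
        rw [integral_add (hint a) (hint (-a)), hmgf, hmgf, neg_sq, two_mul]

end GaussianExponentialMoments

section EntireFunctions

theorem norm_cexp_mul_ofReal_le (z : ℂ) (y : ℝ) :
    ‖Complex.exp (z * y)‖ ≤ Real.exp (‖z‖ * |y|) :=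
  calc ‖Complex.exp (z * y)‖ ≤ Real.exp ‖z * y‖ := Complex.norm_exp_le_exp_norm _
    _ = Real.exp (‖z‖ * |y|) := by rw [norm_mul, Complex.norm_real, Real.norm_eq_abs]

theorem norm_cexp_mul_ofReal_mul_ofReal_le (z : ℂ) (y : ℝ) :
    ‖Complex.exp (z * y) * y‖ ≤ Real.exp ((‖z‖ + 1) * |y|) := by
  have hy : |y| ≤ Real.exp |y| := by linarith [Real.add_one_le_exp |y|]
  rw [norm_mul, Complex.norm_real, Real.norm_eq_abs, add_mul, one_mul, Real.exp_add]
  gcongr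
  exact norm_cexp_mul_ofReal_le z y

theorem differentiable_integral_cexp_smul {E : Type*} [NormedAddCommGroup E] [NormedSpace ℂ E]
    {μ : Measure ℝ} {f : ℝ → E} (hf : AEStronglyMeasurable f μ)
    (hint : ∀ c : ℝ, Integrable (fun y => Real.exp (c * |y|) * ‖f y‖) μ) :
    Differentiable ℂ fun z : ℂ => ∫ y, Complex.exp (z * y) • f y ∂μ := by
  intro z
  have hmeas (w : ℂ) : AEStronglyMeasurable (fun y : ℝ => Complex.exp (w * y) • f y) μ :=
    AEStronglyMeasurable.smul (by fun_prop) hf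
  have hderiv_meas : AEStronglyMeasurable (fun y : ℝ => (Complex.exp (z * y) * y) • f y) μ :=
    AEStronglyMeasurable.smul (by fun_prop) hf
  have hz_int : Integrable (fun y : ℝ => Complex.exp (z * y) • f y) μ := by
    refine (hint ‖z‖).mono' (hmeas z) (ae_of_all _ fun y => ?_)
    rw [norm_smul]
    gcongr
    exact norm_cexp_mul_ofReal_le z y
  have hderiv_le (y : ℝ) (w : ℂ) (hw : w ∈ Metric.ball z 1) :
      ‖(Complex.exp (w * y) * y) • f y‖ ≤ Real.exp ((‖z‖ + 1 + 1) * |y|) * ‖f y‖ := by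
    have hwz : ‖w‖ ≤ ‖z‖ + 1 :=
      (norm_le_norm_add_norm_sub' w z).trans (by gcongr; exact (mem_ball_iff_norm.1 hw).le)
    rw [norm_smul]
    gcongr
    exact (norm_cexp_mul_ofReal_mul_ofReal_le w y).trans (by gcongr)
  have hderiv (y : ℝ) (w : ℂ) :
      HasDerivAt (fun w : ℂ => Complex.exp (w * y) • f y) ((Complex.exp (w * y) * y) • f y) w :=
    ((hasDerivAt_mul_const (y : ℂ)).cexp).smul_const (f y)
  exact (hasDerivAt_integral_of_dominated_loc_of_deriv_le (Metric.ball_mem_nhds z one_pos)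
    (Eventually.of_forall hmeas) hz_int hderiv_meas (ae_of_all _ hderiv_le) (hint (‖z‖ + 1 + 1))
    (ae_of_all _ fun y w _ => hderiv y w)).2.differentiableAt

variable {F : ℂ → ℂ} {f : ℝ → ℝ}

theorem contDiff_of_entire_extension (hF : Differentiable ℂ F) (h : ∀ t : ℝ, F t = f t)
    (m : WithTop ℕ∞) : ContDiff ℝ m f := by
  simpa only [h, Complex.ofReal_re] using (hF.contDiff (n := m)).real_of_complex

theorem iteratedDeriv_eq_re_of_entire_extension (hF : Differentiable ℂ F)
    (h : ∀ t : ℝ, F t = f t) (m : ℕ) (t : ℝ) :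
    iteratedDeriv m f t = (iteratedDeriv m F t).re := by
  induction m generalizing t with
  | zero => simp only [iteratedDeriv_zero, h, Complex.ofReal_re]
  | succ m ih =>
    rw [iteratedDeriv_succ, funext ih, iteratedDeriv_succ]
    have hdiff : Differentiable ℂ (iteratedDeriv m F) :=
      (hF.contDiff (n := ⊤)).differentiable_iteratedDeriv m (WithTop.coe_lt_top _)
    exact (hdiff t).hasDerivAt.real_of_complex.deriv

theorem abs_iteratedDeriv_le_of_entire_extension (hF : Differentiable ℂ F)
    (h : ∀ t : ℝ, F t = f t) {t B : ℝ} (hB : ∀ z : ℂ, ‖z - t‖ = 1 → ‖F z‖ ≤ B) (m : ℕ) :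
    |iteratedDeriv m f t| ≤ m.factorial * B := by
  rw [iteratedDeriv_eq_re_of_entire_extension hF h]
  have hcauchy := Complex.norm_iteratedDeriv_le_of_forall_mem_sphere_norm_le m one_pos
    hF.diffContOnCl fun z hz => hB z (mem_sphere_iff_norm.1 hz)
  rw [one_pow, div_one] at hcauchy
  exact (Complex.abs_re_le_norm _).trans hcauchy

end EntireFunctions

theorem abs_sub_taylor_sum_le {f : ℝ → ℝ} {n : ℕ} {x₀ x M : ℝ} (hf : ContDiff ℝ (n + 1) f)
    (hM : ∀ t ∈ Set.uIcc x₀ x, |iteratedDeriv (n + 1) f t| ≤ M) :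
    |f x - ∑ ν ∈ range (n + 1), iteratedDeriv ν f x₀ / (ν.factorial : ℝ) * (x - x₀) ^ ν| ≤
      M * |x - x₀| ^ (n + 1) / (n + 1).factorial := by
  rcases eq_or_ne x₀ x with rfl | hne
  · simp [sum_range_succ']
  have htaylor : taylorWithinEval f n (Set.uIcc x₀ x) x₀ x =
      ∑ ν ∈ range (n + 1), iteratedDeriv ν f x₀ / (ν.factorial : ℝ) * (x - x₀) ^ ν := by
    rw [taylor_within_apply]
    refine sum_congr rfl fun ν hν => ?_
    have hνn : (ν : WithTop ℕ∞) ≤ n + 1 := by exact_mod_cast (mem_range.1 hν).le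
    rw [iteratedDerivWithin_eq_iteratedDeriv (uniqueDiffOn_uIcc hne) (hf.of_le hνn).contDiffAt
      Set.left_mem_uIcc, smul_eq_mul]
    ring
  obtain ⟨t, ht, hlagrange⟩ := taylor_mean_remainder_lagrange_iteratedDeriv hne hf.contDiffOn
  rw [← htaylor, hlagrange, abs_div, abs_mul, abs_pow, Nat.abs_cast]
  gcongr
  exact hM t (Set.uIoo_subset_uIcc_self ht)

section GaussianSmoothing

/-- The entire extension of `Σ_v`. Completing the square in the density of `N(t, v)` gives
`Σ_v(t) = e^{-t²/(2v)} E_{Y ∼ N(0,v)} [e^{tY/v} σ(Y)]`, and the right-hand side makes sense for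
complex `t`. -/
def gsmoothComplex (σ : ℝ → ℝ) (v : ℝ≥0) (z : ℂ) : ℂ :=
  Complex.exp (-z ^ 2 / (2 * v)) * ∫ y, Complex.exp (z / v * y) • (σ y : ℂ) ∂gaussianReal 0 v

variable {σ : ℝ → ℝ} {v : ℝ≥0} {A a : ℝ}

theorem gaussianPDFReal_eq_exp_mul (hv : v ≠ 0) (t y : ℝ) :
    gaussianPDFReal t v y =
      Real.exp (-t ^ 2 / (2 * v)) * (gaussianPDFReal 0 v y * Real.exp (t / v * y)) := by
  have hv' : (v : ℝ) ≠ 0 := NNReal.coe_ne_zero.2 hv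
  have hsquare : -(y - t) ^ 2 / (2 * (v : ℝ)) =
      -t ^ 2 / (2 * v) + (-(y - 0) ^ 2 / (2 * v) + t / v * y) := by
    field_simp
    ring
  rw [gaussianPDFReal, gaussianPDFReal, hsquare, Real.exp_add, Real.exp_add]
  ring

theorem gsmooth_eq_integral_gaussianReal (hσ : Measurable σ) (v : ℝ≥0) (t : ℝ) :
    gsmooth σ v t = ∫ y, σ y ∂gaussianReal t v := by
  have hshift : gaussianReal t v = (gaussianReal 0 v).map (· + t) := by
    rw [gaussianReal_map_add_const, zero_add]
  rw [hshift, integral_map (by fun_prop) hσ.aestronglyMeasurable, gsmooth, Real.toNNReal_coe]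

theorem gsmoothComplex_ofReal (hσ : Measurable σ) (hv : v ≠ 0) (t : ℝ) :
    gsmoothComplex σ v t = gsmooth σ v t := by
  rw [gsmooth_eq_integral_gaussianReal hσ, ← integral_complex_ofReal, gsmoothComplex,
    integral_gaussianReal_eq_integral_smul hv, integral_gaussianReal_eq_integral_smul hv,
    ← integral_const_mul]
  refine integral_congr_ae (ae_of_all _ fun y => ?_)
  simp only [gaussianPDFReal_eq_exp_mul hv t y, Complex.real_smul, smul_eq_mul]
  push_cast
  ring

theorem integrable_exp_mul_abs_mul_norm_gaussianReal (hσ : Measurable σ)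
    (hbound : ∀ y, |σ y| ≤ A * Real.exp (a * |y|)) (v : ℝ≥0) (c : ℝ) :
    Integrable (fun y => Real.exp (c * |y|) * ‖(σ y : ℂ)‖) (gaussianReal 0 v) := by
  refine ((integrable_exp_mul_abs_gaussianReal v (c + a)).const_mul A).mono'
    (by fun_prop) (ae_of_all _ fun y => ?_)
  rw [norm_mul, Real.norm_eq_abs, Real.abs_exp, norm_norm, Complex.norm_real, Real.norm_eq_abs,
    add_mul, Real.exp_add, mul_left_comm]
  gcongr
  exact hbound y

theorem differentiable_gsmoothComplex (hσ : Measurable σ)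
    (hbound : ∀ y, |σ y| ≤ A * Real.exp (a * |y|)) (v : ℝ≥0) :
    Differentiable ℂ (gsmoothComplex σ v) := by
  have hlaplace : Differentiable ℂ fun z : ℂ =>
      ∫ y, Complex.exp (z * y) • (σ y : ℂ) ∂gaussianReal 0 v :=
    differentiable_integral_cexp_smul (by fun_prop)
      (integrable_exp_mul_abs_mul_norm_gaussianReal hσ hbound v)
  have hdiv : Differentiable ℂ fun z : ℂ => z / (v : ℂ) := by fun_prop
  exact Differentiable.mul (by fun_prop) (hlaplace.comp hdiv)

theorem norm_integral_cexp_smul_gaussianReal_le (hbound : ∀ y, |σ y| ≤ A * Real.exp (a * |y|))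
    (v : ℝ≥0) (z : ℂ) :
    ‖∫ y, Complex.exp (z * y) • (σ y : ℂ) ∂gaussianReal 0 v‖ ≤
      2 * A * Real.exp (v * (‖z‖ + a) ^ 2 / 2) := by
  have hA : 0 ≤ A := nonneg_of_abs_le_mul_exp hbound
  have hintegrand (y : ℝ) : ‖Complex.exp (z * y) • (σ y : ℂ)‖ ≤
      A * Real.exp ((‖z‖ + a) * |y|) := by
    rw [norm_smul, Complex.norm_real, Real.norm_eq_abs, add_mul, Real.exp_add, mul_left_comm]
    gcongr
    · exact norm_cexp_mul_ofReal_le z y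
    · exact hbound y
  calc ‖∫ y, Complex.exp (z * y) • (σ y : ℂ) ∂gaussianReal 0 v‖
      ≤ ∫ y, A * Real.exp ((‖z‖ + a) * |y|) ∂gaussianReal 0 v :=
        norm_integral_le_of_norm_le ((integrable_exp_mul_abs_gaussianReal v _).const_mul A)
          (ae_of_all _ hintegrand)
    _ ≤ A * (2 * Real.exp (v * (‖z‖ + a) ^ 2 / 2)) := by
        rw [integral_const_mul]
        gcongr
        exact integral_exp_mul_abs_gaussianReal_le v _
    _ = 2 * A * Real.exp (v * (‖z‖ + a) ^ 2 / 2) := by ring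

theorem norm_gsmoothComplex_le (hbound : ∀ y, |σ y| ≤ A * Real.exp (a * |y|)) (hv : v ≠ 0)
    (z : ℂ) :
    ‖gsmoothComplex σ v z‖ ≤ 2 * A * Real.exp (‖z‖ ^ 2 / v + a * ‖z‖ + a ^ 2 * v / 2) := by
  have hv' : (v : ℝ) ≠ 0 := NNReal.coe_ne_zero.2 hv
  have hprefactor : ‖Complex.exp (-z ^ 2 / (2 * v))‖ ≤ Real.exp (‖z‖ ^ 2 / (2 * v)) :=
    (Complex.norm_exp_le_exp_norm _).trans_eq (by simp)
  have hintegral : ‖∫ y, Complex.exp (z / v * y) • (σ y : ℂ) ∂gaussianReal 0 v‖ ≤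
      2 * A * Real.exp (v * (‖z‖ / v + a) ^ 2 / 2) := by
    simpa using norm_integral_cexp_smul_gaussianReal_le hbound v (z / v)
  have hexponent : ‖z‖ ^ 2 / (2 * v) + v * (‖z‖ / v + a) ^ 2 / 2 =
      ‖z‖ ^ 2 / v + a * ‖z‖ + a ^ 2 * v / 2 := by
    field_simp
    ring
  rw [gsmoothComplex, norm_mul, ← hexponent, Real.exp_add, mul_left_comm]
  gcongr

theorem contDiff_gsmooth (hσ : Measurable σ) (hbound : ∀ y, |σ y| ≤ A * Real.exp (a * |y|))
    (hv : v ≠ 0) (m : WithTop ℕ∞) : ContDiff ℝ m (gsmooth σ v) :=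
  contDiff_of_entire_extension (differentiable_gsmoothComplex hσ hbound v)
    (gsmoothComplex_ofReal hσ hv) m

theorem abs_iteratedDeriv_gsmooth_zero_le (hσ : Measurable σ)
    (hbound : ∀ y, |σ y| ≤ A * Real.exp (a * |y|)) (hv : v ≠ 0) (m : ℕ) :
    |iteratedDeriv m (gsmooth σ v) 0| ≤
      m.factorial * (2 * A * Real.exp (1 / v + a + a ^ 2 * v / 2)) := by
  refine abs_iteratedDeriv_le_of_entire_extension (differentiable_gsmoothComplex hσ hbound v)
    (gsmoothComplex_ofReal hσ hv) (fun z hz => ?_) m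
  have hz' : ‖z‖ = 1 := by simpa using hz
  simpa [hz'] using norm_gsmoothComplex_le hbound hv z

theorem abs_iteratedDeriv_gsmooth_le (hσ : Measurable σ) (ha : 0 ≤ a)
    (hbound : ∀ y, |σ y| ≤ A * Real.exp (a * |y|)) (hv : v ≠ 0) (m : ℕ) (t : ℝ) :
    |iteratedDeriv m (gsmooth σ v) t| ≤
      m.factorial * (2 * A * Real.exp (1 / v + a + a ^ 2 * v / 2)) * Real.exp (a * |t|) := by
  have hA : 0 ≤ A := nonneg_of_abs_le_mul_exp hbound
  -- Translating `σ` by `t` moves the estimate at `0` to `t` and costs a factor `e^{a|t|}` in `A`.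
  have htranslate : gsmooth (fun y => σ (y + t)) v = fun u => gsmooth σ v (u + t) := by
    ext u
    simp only [gsmooth, add_assoc]
  have hbound_translate (y : ℝ) :
      |σ (y + t)| ≤ A * Real.exp (a * |t|) * Real.exp (a * |y|) :=
    calc |σ (y + t)| ≤ A * Real.exp (a * (|y| + |t|)) :=
          (hbound _).trans (by gcongr; exact abs_add_le y t)
      _ = A * Real.exp (a * |t|) * Real.exp (a * |y|) := by rw [mul_add, Real.exp_add]; ring
  have hzero := abs_iteratedDeriv_gsmooth_zero_le (hσ.comp (measurable_add_const t))
    hbound_translate hv m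
  simp only [Function.comp_def, htranslate, iteratedDeriv_comp_add_const, zero_add] at hzero
  exact hzero.trans_eq (by ring)

theorem abs_taylorRem_le (hσ : Measurable σ) (ha : 0 ≤ a)
    (hbound : ∀ y, |σ y| ≤ A * Real.exp (a * |y|)) (hv : v ≠ 0) (P : ℕ) (z : ℝ) :
    |taylorRem σ v P z| ≤
      2 * A * Real.exp (1 / v + a + a ^ 2 * v / 2) * (|z| ^ (P + 1) * Real.exp (a * |z|)) := by
  have hA : 0 ≤ A := nonneg_of_abs_le_mul_exp hbound
  set K := 2 * A * Real.exp (1 / v + a + a ^ 2 * v / 2)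
  have hderiv (t : ℝ) (ht : t ∈ Set.uIcc 0 z) : |iteratedDeriv (P + 1) (gsmooth σ v) t| ≤
      (P + 1).factorial * K * Real.exp (a * |z|) := by
    refine (abs_iteratedDeriv_gsmooth_le hσ ha hbound hv _ t).trans ?_
    have htz : |t| ≤ |z| := by simpa using Set.abs_sub_left_of_mem_uIcc ht
    gcongr
  have htaylor := abs_sub_taylor_sum_le (contDiff_gsmooth hσ hbound hv _) hderiv
  simp only [sub_zero] at htaylor
  rw [taylorRem]
  refine htaylor.trans_eq ?_
  field_simp

end GaussianSmoothing

section ConditionalExpectation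

theorem abs_bsign (b : Bool) : |bsign b| = 1 := by cases b <;> simp [bsign]

theorem IsSign.abs_eq_one {s : ℝ} (h : IsSign s) : |s| = 1 := by
  rcases h with rfl | rfl <;> simp

theorem abs_bExp_le {k : ℕ} {f : (Fin k → Bool) → ℝ} {D : ℝ} (h : ∀ x, |f x| ≤ D) :
    |bExp k f| ≤ D := by
  rw [bExp, abs_div, abs_of_pos (by positivity : (0 : ℝ) < 2 ^ k), div_le_iff₀ (by positivity)]
  calc |∑ x, f x| ≤ ∑ _x : Fin k → Bool, D :=
        (abs_sum_le_sum_abs _ _).trans (sum_le_sum fun x _ => h x)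
    _ = D * 2 ^ k := by simp [mul_comm]

/-- `∑ |w_i| + |b|`, the `ℓ¹`-norm of the weights and the bias. It dominates `|G|` for all signs
and inputs at once. -/
def weightL1Norm {k : ℕ} (g : (Fin k → ℝ) × ℝ) : ℝ := ∑ i, |g.1 i| + |g.2|

variable {n k : ℕ}

theorem weightL1Norm_nonneg (g : (Fin k → ℝ) × ℝ) : 0 ≤ weightL1Norm g := by
  unfold weightL1Norm
  positivity

theorem weightL1Norm_smul (c : ℝ) (g : (Fin k → ℝ) × ℝ) :
    weightL1Norm (c • g) = |c| * weightL1Norm g := by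
  simp [weightL1Norm, abs_mul, mul_add, mul_sum]

theorem measurable_weightL1Norm : Measurable (weightL1Norm (k := k)) := by
  unfold weightL1Norm
  fun_prop

theorem abs_Gval_le_weightL1Norm {τ : Fin k → ℝ} (hτ : ∀ i, |τ i| ≤ 1) {s : ℝ} (hs : |s| ≤ 1)
    (g : (Fin k → ℝ) × ℝ) (x : Fin k → Bool) : |Gval k τ s g x| ≤ weightL1Norm g := by
  refine (abs_add_le _ _).trans (add_le_add ((abs_sum_le_sum_abs _ _).trans
    (sum_le_sum fun i _ => ?_)) ?_)
  · rw [abs_mul, abs_mul, abs_abs, abs_bsign, mul_one]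
    exact mul_le_of_le_one_left (abs_nonneg _) (hτ i)
  · rw [abs_mul, abs_abs]
    exact mul_le_of_le_one_left (abs_nonneg _) hs

theorem abs_condExpFn_le {τ : Fin k → ℝ} (hτ : ∀ i, |τ i| ≤ 1) {s : ℝ} (hs : |s| ≤ 1)
    {F Φ : ℝ → ℝ} (hF : ∀ z, |F z| ≤ Φ |z|) (hΦ : MonotoneOn Φ (Set.Ici 0))
    (hint : Integrable (fun g => Φ (weightL1Norm g)) (weightMeasure n k)) :
    |condExpFn n k τ s F| ≤ ∫ g, Φ (weightL1Norm g) ∂weightMeasure n k := by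
  rw [condExpFn, ← Real.norm_eq_abs]
  refine norm_integral_le_of_norm_le hint (ae_of_all _ fun g => abs_bExp_le fun x => ?_)
  rw [abs_mul, abs_prod, prod_congr rfl fun i _ => abs_bsign (x i), prod_const_one, one_mul]
  exact (hF _).trans (hΦ (Set.mem_Ici.2 (abs_nonneg _)) (weightL1Norm_nonneg g)
    (abs_Gval_le_weightL1Norm hτ hs g x))

theorem integrable_exp_mul_weightL1Norm (n k : ℕ) (a : ℝ) :
    Integrable (fun g => Real.exp (a * weightL1Norm g)) (weightMeasure n k) := by
  have hcoord := integrable_exp_mul_abs_gaussianReal (n : ℝ≥0)⁻¹ a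
  have hprod := (Integrable.fintype_prod fun _ : Fin k => hcoord).mul_prod hcoord
  refine hprod.congr (ae_of_all _ fun g => ?_)
  simp only [weightL1Norm, mul_add, mul_sum, Real.exp_add, Real.exp_sum]

theorem integrable_weightL1Norm_pow_mul_exp (n k m : ℕ) (a : ℝ) :
    Integrable (fun g => weightL1Norm g ^ m * Real.exp (a * weightL1Norm g))
      (weightMeasure n k) :=
  integrable_pow_mul_exp_of_integrable_exp_mul one_ne_zero
    (integrable_exp_mul_weightL1Norm n k _) (integrable_exp_mul_weightL1Norm n k _) m

theorem weightMeasure_eq_map_smul (n k : ℕ) :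
    weightMeasure n k = (weightMeasure 1 k).map (√(n : ℝ)⁻¹ • ·) := by
  have hgauss : gaussianReal 0 (n : ℝ≥0)⁻¹ =
      (gaussianReal 0 ((1 : ℕ) : ℝ≥0)⁻¹).map (√(n : ℝ)⁻¹ * ·) := by
    rw [gaussianReal_map_const_mul]
    congr 1
    · simp
    · ext; simp
  have hpi := Measure.pi_map_pi (μ := fun _ : Fin k => gaussianReal 0 ((1 : ℕ) : ℝ≥0)⁻¹)
    (f := fun _ => (√(n : ℝ)⁻¹ * ·)) (fun _ => by fun_prop)
  rw [weightMeasure, hgauss, ← hpi, Measure.map_prod_map _ _ (by fun_prop) (by fun_prop)]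
  rfl

theorem integral_weightL1Norm_pow_mul_exp_le {a : ℝ} (ha : 0 ≤ a) (hn : 1 ≤ n) (k m : ℕ) :
    ∫ g, weightL1Norm g ^ m * Real.exp (a * weightL1Norm g) ∂weightMeasure n k ≤
      √(n : ℝ)⁻¹ ^ m *
        ∫ g, weightL1Norm g ^ m * Real.exp (a * weightL1Norm g) ∂weightMeasure 1 k := by
  have hr1 : √(n : ℝ)⁻¹ ≤ 1 :=
    Real.sqrt_le_one.2 (inv_le_one_of_one_le₀ (by exact_mod_cast hn))
  have hmeas := measurable_weightL1Norm (k := k)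
  rw [weightMeasure_eq_map_smul n, integral_map (by fun_prop) (by fun_prop),
    ← integral_const_mul]
  refine integral_mono_of_nonneg (ae_of_all _ fun g => ?_)
    ((integrable_weightL1Norm_pow_mul_exp 1 k m a).const_mul _) (ae_of_all _ fun g => ?_)
  · have := weightL1Norm_nonneg (√(n : ℝ)⁻¹ • g)
    simp only [Pi.zero_apply]
    positivity
  · have hg := weightL1Norm_nonneg g
    simp only [weightL1Norm_smul, abs_of_nonneg (Real.sqrt_nonneg _), mul_pow, mul_assoc]
    gcongr
    exact mul_le_of_le_one_left hg hr1

end ConditionalExpectation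

theorem sqrt_inv_pow_succ_eq_rpow {x : ℝ} (hx : 0 ≤ x) (P : ℕ) :
    √x⁻¹ ^ (P + 1) = x ^ (-(P : ℝ) / 2 - 1 / 2) := by
  rw [Real.sqrt_eq_rpow, ← Real.rpow_natCast, ← Real.rpow_mul (by positivity),
    Real.inv_rpow hx, ← Real.rpow_neg hx]
  congr 1
  push_cast
  ring

theorem monotoneOn_pow_mul_exp {a : ℝ} (ha : 0 ≤ a) (m : ℕ) :
    MonotoneOn (fun r : ℝ => r ^ m * Real.exp (a * r)) (Set.Ici 0) := by
  intro r (hr : 0 ≤ r) r' (hr' : 0 ≤ r') hrr'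
  dsimp only
  gcongr

theorem exists_abs_condExpFn_taylorRem_le {σ : ℝ → ℝ} (hσ : Measurable σ) (hexp : ExpBounded σ)
    (k P : ℕ) {v₀ : ℝ} (hv₀ : 0 < v₀) (v₁ : ℝ) :
    ∃ C : ℝ, ∀ v : ℝ, v₀ ≤ v → v ≤ v₁ → ∀ n : ℕ, 1 ≤ n →
      ∀ τ : Fin k → ℝ, (∀ i, |τ i| ≤ 1) → ∀ s : ℝ, |s| ≤ 1 →
        |condExpFn n k τ s (taylorRem σ v P)| ≤ C * (n : ℝ) ^ (-(P : ℝ) / 2 - 1 / 2) := by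
  obtain ⟨A, a, ha, hbound⟩ := hexp
  have hA : 0 ≤ A := nonneg_of_abs_le_mul_exp hbound
  set K := 2 * A * Real.exp (1 / v₀ + a + a ^ 2 * v₁ / 2) with hK_def
  set moment : ℕ → ℝ := fun n =>
    ∫ g, weightL1Norm g ^ (P + 1) * Real.exp (a * weightL1Norm g) ∂weightMeasure n k
  refine ⟨K * moment 1, fun v hv hvv₁ n hn τ hτ s hs => ?_⟩
  have hK : 0 ≤ K := by positivity
  lift v to ℝ≥0 using hv₀.le.trans hv
  have hv0 : v ≠ 0 := NNReal.coe_ne_zero.1 (hv₀.trans_le hv).ne'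
  have hrem (z : ℝ) : |taylorRem σ v P z| ≤ K * (|z| ^ (P + 1) * Real.exp (a * |z|)) :=
    (abs_taylorRem_le hσ ha hbound hv0 P z).trans (by rw [hK_def]; gcongr)
  calc |condExpFn n k τ s (taylorRem σ v P)| ≤ K * moment n := by
        rw [← integral_const_mul]
        exact abs_condExpFn_le hτ hs hrem
          (fun r hr r' hr' hrr' =>
            mul_le_mul_of_nonneg_left (monotoneOn_pow_mul_exp ha _ hr hr' hrr') hK)
          ((integrable_weightL1Norm_pow_mul_exp n k _ a).const_mul K)
    _ ≤ K * (√(n : ℝ)⁻¹ ^ (P + 1) * moment 1) := by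
        gcongr
        exact integral_weightL1Norm_pow_mul_exp_le ha hn k _
    _ = K * moment 1 * (n : ℝ) ^ (-(P : ℝ) / 2 - 1 / 2) := by
        rw [sqrt_inv_pow_succ_eq_rpow n.cast_nonneg]
        ring

theorem taylor_remainder_term_general {σ : ℝ → ℝ} (hmeas : Measurable σ) (hexp : ExpBounded σ)
    (k P : ℕ) :
    ∃ C₀ : ℝ, 0 < C₀ ∧ ∀ n : ℕ, k < n →
      ∀ τ : Fin k → ℝ, (∀ i, |τ i| ≤ 1) → ∀ s : ℝ, |s| ≤ 1 →
        |condExpFn n k τ s (taylorRem σ (1 - (k : ℝ) / n) P)| ≤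
          C₀ * (n : ℝ) ^ (-(P : ℝ) / 2 - 1 / 2) := by
  obtain ⟨C, hC⟩ := exists_abs_condExpFn_taylorRem_le hmeas hexp k P
    (by positivity : (0 : ℝ) < 1 / (k + 1)) 1
  refine ⟨max C 1, by positivity, fun n hkn τ hτ s hs => ?_⟩
  have hkn' : (k : ℝ) + 1 ≤ n := by exact_mod_cast hkn
  have hratio : (k : ℝ) / n ≤ k / (k + 1) := by gcongr
  have hsplit : (k : ℝ) / (k + 1) + 1 / (k + 1) = 1 := by field_simp
  have hratio_nonneg : 0 ≤ (k : ℝ) / n := by positivity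
  refine (hC _ (by linarith) (by linarith) n (by omega) τ hτ s hs).trans ?_
  gcongr
  exact le_max_left C 1

/-- Taylor remainder term: for measurable, polynomially bounded `σ`,
`k ≥ 1`, `P ≥ k`, with `Σ_n := Σ_{1-k/n}` and `R_{P,n}` its degree-`P` Taylor remainder at `0`,
conditionally on any fixed signs, `E[M_k(x) · R_{P,n}(G)] = O(n^{-P/2 - 1/2})`, uniformly
over the signs. -/
theorem taylor_remainder_term
    (σ : ℝ → ℝ) (hmeas : Measurable σ) (hpb : PolyBounded σ)
    (k P : ℕ) (hk : 1 ≤ k) (hkP : k ≤ P) :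
    ∃ C₀ : ℝ, 0 < C₀ ∧ ∃ n₀ : ℕ, ∀ n : ℕ, n₀ ≤ n → 2 * k ≤ n →
      ∀ τ : Fin k → ℝ, (∀ i, IsSign (τ i)) → ∀ s : ℝ, IsSign s →
        |condExpFn n k τ s (taylorRem σ (1 - (k : ℝ) / n) P)| ≤
          C₀ * (n : ℝ) ^ (-(P : ℝ) / 2 - 1 / 2) := by
  obtain ⟨C₀, hC₀, hle⟩ := taylor_remainder_term_general hmeas hpb.expBounded k P
  exact ⟨C₀, hC₀, 0, fun n _ hkn τ hτ s hs =>
    hle n (by omega) τ (fun i => (hτ i).abs_eq_one.le) s hs.abs_eq_one.le⟩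
end
end
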